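/- arXiv:1503.02862 — 2 statements merged into one kernel-verified Lean document; each statement's English description precedes it below -/
import Mathlib

section
/- With U the Poisson extension of w(x) = (1 + |x|²)^{−(n−2γ)/2} as defined in the context, one has ∫_{ℝ^{n+1}_+} y^{a+4}·(∂_y U)² dx dy = ((a+5)(a+3)/5)·∫_{ℝ^{n+1}_+} y^{a+2}·U² dx dy. -/
open MeasureTheory Real
open scoped ENNReal

namespace PX

lemma tonelli2 {P Q : Type*} [MeasurableSpace P] [MeasurableSpace Q] (ν : Measure P) (μ : Measure Q)
    [SFinite ν] [SFinite μ] (f g : P → Q → ℝ≥0∞) (h : Q → ℝ≥0∞)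
    (hf : Measurable (Function.uncurry f)) (hg : Measurable (Function.uncurry g))
    (hh : Measurable h) :
    ∫⁻ q, (∫⁻ p, f p q ∂ν) * (∫⁻ p, g p q ∂ν) * h q ∂μ
      = ∫⁻ p₁, ∫⁻ p₂, ∫⁻ q, f p₁ q * g p₂ q * h q ∂μ ∂ν ∂ν := by
  have hf' : ∀ p, Measurable (f p) := fun p => hf.comp measurable_prodMk_left
  have hg' : ∀ p, Measurable (g p) := fun p => hg.comp measurable_prodMk_left
  have hf2 : ∀ q, Measurable (fun p => f p q) := fun p => hf.comp measurable_prodMk_right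
  have hg2 : ∀ q, Measurable (fun p => g p q) := fun p => hg.comp measurable_prodMk_right
  have key : ∀ p₁, ∫⁻ p₂, ∫⁻ q, f p₁ q * g p₂ q * h q ∂μ ∂ν
      = ∫⁻ q, f p₁ q * ((∫⁻ p, g p q ∂ν) * h q) ∂μ := by
    intro p₁
    rw [lintegral_lintegral_swap]
    · congr 1; ext q
      rw [← lintegral_mul_const _ (hg2 q), ← lintegral_const_mul]
      · simp only [mul_assoc]
      · exact (hg2 q).mul_const _
    · apply Measurable.aemeasurable
      exact (((hf' p₁).comp measurable_snd).mul hg).mul (hh.comp measurable_snd)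
  simp_rw [key]
  rw [lintegral_lintegral_swap]
  · congr 1; ext q
    rw [lintegral_mul_const _ (hf2 q), mul_assoc]
  · apply Measurable.aemeasurable
    have : Measurable (fun q => ∫⁻ p, g p q ∂ν) := hg.lintegral_prod_left
    exact hf.mul ((this.mul hh).comp measurable_snd)

lemma lint_pow_exp {r q p : ℝ} (hr : -1 < r) (hq : 0 < q) (hp : 0 < p) :
    ∫⁻ y in Set.Ioi (0:ℝ), ENNReal.ofReal (y ^ r * exp (-q * y ^ p))
      = ENNReal.ofReal (q ^ (-(r+1)/p) * (1/p) * Gamma ((r+1)/p)) := by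
  rw [← integral_rpow_mul_exp_neg_mul_rpow hp hr hq, ofReal_integral_eq_lintegral_ofReal]
  · exact integrableOn_rpow_mul_exp_neg_mul_rpow hr hp hq
  · filter_upwards [ae_restrict_mem measurableSet_Ioi] with y hy
    have : 0 < y := hy
    positivity

lemma lint_y {r q : ℝ} (hr : -1 < r) (hq : 0 < q) :
    ∫⁻ y in Set.Ioi (0:ℝ), ENNReal.ofReal (y ^ r * exp (-(q * y ^ 2)))
      = ENNReal.ofReal (q ^ (-((r+1)/2)) * (1/2) * Gamma ((r+1)/2)) := by
  have := lint_pow_exp hr hq (p := 2) (by norm_num)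
  rw [neg_div] at this
  simpa using this

lemma lint_sigma {s c : ℝ} (hs : 0 < s) (hc : 0 < c) :
    ∫⁻ y in Set.Ioi (0:ℝ), ENNReal.ofReal (y ^ (s-1) * exp (-(c * y)))
      = ENNReal.ofReal (c ^ (-s) * Gamma s) := by
  have := lint_pow_exp (r := s - 1) (by linarith) hc (p := 1) (by norm_num)
  simpa using this

lemma lint_t {s c : ℝ} (hs : 0 < s) (hc : 0 < c) :
    ∫⁻ t in Set.Ioi (0:ℝ), ENNReal.ofReal (t ^ (-s-1) * exp (-(c / t)))
      = ENNReal.ofReal (c ^ (-s) * Gamma s) := by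
  have h1 : ∀ t ∈ Set.Ioi (0:ℝ), t ^ (-s-1) * exp (-(c / t)) =
      (|(-1:ℝ)| * t ^ ((-1:ℝ) - 1)) • ((fun u => u ^ (s-1) * exp (-c * u ^ (1:ℝ))) (t ^ (-1:ℝ))) := by
    intro t ht
    have ht : 0 < t := ht
    simp only [smul_eq_mul, abs_neg, abs_one, one_mul, rpow_one]
    rw [← rpow_mul ht.le, ← mul_assoc, ← rpow_add ht, rpow_neg_one]
    congr 2
    · ring
    · rw [div_eq_mul_inv]; ring
  have hint := (integrableOn_Ioi_comp_rpow_iff (fun u => u ^ (s-1) * exp (-c * u ^ (1:ℝ))) (p := -1) (by norm_num)).2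
    (integrableOn_rpow_mul_exp_neg_mul_rpow (s := s - 1) (by linarith) one_pos hc)
  have h2 := integral_comp_rpow_Ioi (fun u => u ^ (s-1) * exp (-c * u ^ (1:ℝ))) (p := -1) (by norm_num)
  rw [integral_rpow_mul_exp_neg_mul_rpow one_pos (by linarith) hc] at h2
  have h3 : c ^ (-s) * Gamma s = c ^ (-(s - 1 + 1) / 1) * (1 / 1) * Gamma ((s - 1 + 1) / 1) := by
    simp
  rw [h3, ← h2, ofReal_integral_eq_lintegral_ofReal hint]
  · apply setLIntegral_congr_fun measurableSet_Ioi
    intro t ht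
    simp only
    rw [h1 t ht]
  · filter_upwards [ae_restrict_mem measurableSet_Ioi] with y hy
    have : 0 < y := hy
    simp only [smul_eq_mul, Pi.zero_apply]
    positivity

section gauss
variable {n : ℕ}
local notation "E" => EuclideanSpace ℝ (Fin n)

lemma gauss1 {b : ℝ} (hb : 0 < b) :
    ∫⁻ v : E, ENNReal.ofReal (exp (-(b * ‖v‖ ^ 2))) = ENNReal.ofReal ((π / b) ^ ((n:ℝ)/2)) := by
  have h := GaussianFourier.integral_rexp_neg_mul_sq_norm (V := E) hb
  have hI : Integrable (fun v : E => exp (-b * ‖v‖ ^ 2)) := by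
    by_contra hc
    rw [integral_undef hc] at h
    have : 0 < (π / b) ^ ((Module.finrank ℝ E : ℝ)/2) := by positivity
    linarith
  simp only [finrank_euclideanSpace, Fintype.card_fin] at h
  rw [← h, ofReal_integral_eq_lintegral_ofReal hI]
  · simp
  · filter_upwards with v; positivity

lemma gauss2 {p q : ℝ} (hp : 0 < p) (hq : 0 < q) (u v : E) :
    ∫⁻ x : E, ENNReal.ofReal (exp (-(p * ‖x - u‖ ^ 2 + q * ‖x - v‖ ^ 2)))
      = ENNReal.ofReal ((π / (p + q)) ^ ((n:ℝ)/2) * exp (-(p * q / (p + q) * ‖u - v‖ ^ 2))) := by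
  have hpq : 0 < p + q := by positivity
  set c : E := (p / (p+q)) • u + (q/(p+q)) • v with hc
  have h1 : ∀ x : E, p * ‖x - u‖ ^ 2 + q * ‖x - v‖ ^ 2
      = (p + q) * ‖x - c‖ ^ 2 + p * q / (p + q) * ‖u - v‖ ^ 2 := by
    intro x
    simp only [← real_inner_self_eq_norm_sq, hc, inner_sub_left, inner_sub_right, inner_add_left,
      inner_add_right, real_inner_smul_left, real_inner_smul_right]
    rw [real_inner_comm x u, real_inner_comm x v, real_inner_comm u v]
    field_simp
    ring
  simp_rw [h1, neg_add, exp_add]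
  rw [ENNReal.ofReal_mul (by positivity), ← gauss1 hpq]
  rw [← lintegral_sub_right_eq_self (fun x : E => ENNReal.ofReal (exp (-((p+q) * ‖x‖^2)))) c,
    ← lintegral_mul_const _ (by fun_prop)]
  congr 1; ext x
  rw [ENNReal.ofReal_mul (by positivity)]
end gauss

lemma conv2 (i j : ℕ) (B : ℝ) (H : ℝ → ℝ) (hH : Measurable H) (hH0 : ∀ T, 0 < T → 0 ≤ H T)
    (hB : ∀ T : ℝ, 0 < T → ∫ t in (0:ℝ)..T, t ^ (1+j) * (T - t) ^ (1+i) = B * T ^ (3+i+j)) :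
    ∫⁻ t₁ in Set.Ioi (0:ℝ), ∫⁻ t₂ in Set.Ioi (0:ℝ),
      ENNReal.ofReal (t₁ ^ (1+j) * t₂ ^ (1+i) * H (t₁ + t₂))
      = ENNReal.ofReal B * ∫⁻ T in Set.Ioi (0:ℝ), ENNReal.ofReal (T ^ (3+i+j) * H T) := by
  have hB0 : 0 ≤ B := by
    have := hB 1 one_pos
    simp only [one_pow, mul_one] at this
    rw [← this]
    apply intervalIntegral.integral_nonneg zero_le_one
    intro u hu
    have h1 := hu.1
    have h2 : 0 ≤ 1 - u := by linarith [hu.2]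
    positivity
  set K : ℝ → ℝ → ℝ≥0∞ := fun t₁ T => (Set.Ioi 0).indicator (fun t => (Set.Ioi t).indicator
    (fun T => ENNReal.ofReal (t ^ (1+j) * (T - t) ^ (1+i) * H T)) T) t₁ with hK
  have hKm : Measurable (Function.uncurry K) := by
    have : Function.uncurry K = Set.indicator ({p : ℝ × ℝ | 0 < p.1} ∩ {p : ℝ × ℝ | p.1 < p.2})
      (fun p => ENNReal.ofReal (p.1 ^ (1+j) * (p.2 - p.1) ^ (1+i) * H p.2)) := by
      ext ⟨t, T⟩
      simp only [Function.uncurry, hK, Set.indicator, Set.mem_Ioi, Set.mem_inter_iff, Set.mem_ofPred_eq]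
      split_ifs <;> simp_all
    rw [this]
    apply Measurable.indicator (by fun_prop)
    exact (measurableSet_lt measurable_const measurable_fst).inter
      (measurableSet_lt measurable_fst measurable_snd)
  have e1 : ∫⁻ t₁ in Set.Ioi (0:ℝ), ∫⁻ t₂ in Set.Ioi (0:ℝ),
      ENNReal.ofReal (t₁ ^ (1+j) * t₂ ^ (1+i) * H (t₁ + t₂)) = ∫⁻ t, ∫⁻ T, K t T := by
    rw [← lintegral_indicator measurableSet_Ioi]
    congr 1; ext t
    by_cases ht : t ∈ Set.Ioi (0:ℝ)
    · simp only [hK, Set.indicator_of_mem ht]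
      rw [← lintegral_indicator measurableSet_Ioi]
      rw [← lintegral_sub_right_eq_self _ t]
      congr 1; ext T
      simp only [Set.indicator, Set.mem_Ioi, sub_pos, add_sub_cancel]
    · simp only [hK, Set.indicator_of_notMem ht, lintegral_zero]
  rw [e1, lintegral_lintegral_swap hKm.aemeasurable, ← lintegral_const_mul' _ _ (by simp), ← lintegral_indicator measurableSet_Ioi]
  congr 1; ext T
  by_cases hT : T ∈ Set.Ioi (0:ℝ)
  · rw [Set.indicator_of_mem hT]
    have hT' : 0 < T := hT
    have : ∀ t, K t T = (Set.Ioo 0 T).indicator (fun t => ENNReal.ofReal (t ^ (1+j) * (T - t) ^ (1+i)) * ENNReal.ofReal (H T)) t := by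
      intro t
      simp only [hK, Set.indicator, Set.mem_Ioi, Set.mem_Ioo]
      split_ifs <;> simp_all [ENNReal.ofReal_mul']
    simp_rw [this]
    rw [lintegral_indicator measurableSet_Ioo, lintegral_mul_const _ (by fun_prop),
      setLIntegral_congr (Ioo_ae_eq_Ioc),
      ← ofReal_integral_eq_lintegral_ofReal, ← intervalIntegral.integral_of_le hT'.le, hB T hT',
      ENNReal.ofReal_mul hB0, ENNReal.ofReal_mul (by positivity), mul_assoc]
    · exact (Continuous.intervalIntegrable (by fun_prop) 0 T).1
    · filter_upwards [ae_restrict_mem measurableSet_Ioc] with u hu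
      have h1 := hu.1
      have h2 : 0 ≤ T - u := by linarith [hu.2]
      simp only [Pi.zero_apply]
      positivity
  · rw [Set.indicator_of_notMem hT]
    have : ∀ t, K t T = 0 := by
      intro t
      simp only [hK, Set.indicator, Set.mem_Ioi]
      simp only [Set.mem_Ioi, not_lt] at hT
      split_ifs <;> first | rfl | linarith
    simp [this]

end PX
namespace PX
section main
variable {n : ℕ}
local notation "E" => EuclideanSpace ℝ (Fin n)

noncomputable def ker (n : ℕ) (γ : ℝ) (i : ℕ) (y : ℝ) (z : EuclideanSpace ℝ (Fin n)) : ℝ :=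
  y ^ (2*γ) * (‖z‖^2 + y^2) ^ (-(((n:ℝ) + 2*γ)/2 + i))

noncomputable def Phi (n : ℕ) (γ : ℝ) (w : EuclideanSpace ℝ (Fin n) → ℝ) (i : ℕ)
    (p : EuclideanSpace ℝ (Fin n) × ℝ) (q : ℝ × EuclideanSpace ℝ (Fin n)) : ℝ :=
  p.2 ^ (-(((n:ℝ) + 2*γ)/2 + i) - 1) * q.1 ^ (2*γ) *
    exp (-((‖q.2 - p.1‖^2 + q.1^2) / p.2)) * w p.1

noncomputable def muQ (n : ℕ) : Measure (ℝ × EuclideanSpace ℝ (Fin n)) :=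
  ((volume : Measure ℝ).restrict (Set.Ioi 0)).prod volume

noncomputable def nuP (n : ℕ) : Measure (EuclideanSpace ℝ (Fin n) × ℝ) :=
  (volume : Measure (EuclideanSpace ℝ (Fin n))).prod ((volume : Measure ℝ).restrict (Set.Ioi 0))

instance : SFinite (muQ n) := by unfold muQ; infer_instance
instance : SFinite (nuP n) := by unfold nuP; infer_instance

lemma muQ_pos : ∀ᵐ q ∂(muQ n), 0 < q.1 := by
  have : ∀ᵐ y ∂((volume : Measure ℝ).restrict (Set.Ioi 0)), 0 < y :=
    ae_restrict_mem measurableSet_Ioi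
  exact Measure.quasiMeasurePreserving_fst.ae this

lemma nuP_pos : ∀ᵐ q ∂(nuP n), 0 < q.2 := by
  have : ∀ᵐ y ∂((volume : Measure ℝ).restrict (Set.Ioi 0)), 0 < y :=
    ae_restrict_mem measurableSet_Ioi
  exact Measure.quasiMeasurePreserving_snd.ae this

lemma Phi_meas (γ : ℝ) (w : E → ℝ) (hw : Measurable w) (i : ℕ) :
    Measurable (Function.uncurry (fun p q => ENNReal.ofReal (Phi n γ w i p q))) := by
  unfold Phi Function.uncurry
  fun_prop

lemma int_Phi (γ : ℝ) (hγ : 0 < γ) (w : E → ℝ) (hw : Measurable w) (hw0 : ∀ x, 0 ≤ w x) (i : ℕ)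
    (q : ℝ × E) (hq : 0 < q.1) :
    ∫⁻ p, ENNReal.ofReal (Phi n γ w i p q) ∂(nuP n) =
      ENNReal.ofReal (Gamma (((n:ℝ) + 2*γ)/2 + i)) *
        ∫⁻ ξ, ENNReal.ofReal (ker n γ i q.1 (q.2 - ξ) * w ξ) := by
  have hs : 0 < ((n:ℝ) + 2*γ)/2 + i := by positivity
  unfold nuP
  have hm : Measurable (fun p => ENNReal.ofReal (Phi n γ w i p q)) :=
    (Phi_meas γ w hw i).comp measurable_prodMk_right
  rw [lintegral_prod _ hm.aemeasurable, ← lintegral_const_mul' _ _ (by simp)]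
  congr 1; ext ξ
  have hc : 0 < ‖q.2 - ξ‖^2 + q.1^2 := by positivity
  have h := lint_t hs hc
  have hg := Gamma_pos_of_pos hs
  have hwx := hw0 ξ
  calc _ = ∫⁻ t in Set.Ioi (0:ℝ), ENNReal.ofReal (q.1^(2*γ) * w ξ) *
      ENNReal.ofReal (t ^ (-(((n:ℝ) + 2*γ)/2 + i) - 1) * exp (-((‖q.2 - ξ‖^2 + q.1^2) / t))) := by
        congr 1; ext t
        rw [← ENNReal.ofReal_mul (by positivity)]
        unfold Phi
        congr 1; simp only; ring
    _ = _ := by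
        rw [lintegral_const_mul' _ _ (by simp), h, ← ENNReal.ofReal_mul (by positivity),
          ← ENNReal.ofReal_mul hg.le]
        unfold ker
        congr 1; ring

lemma int_q (γ : ℝ) (hγ : 0 < γ) (w : E → ℝ) (hw0 : ∀ x, 0 ≤ w x) (i j : ℕ)
    (p₁ p₂ : E × ℝ) (h1 : 0 < p₁.2) (h2 : 0 < p₂.2) :
    ∫⁻ q, ENNReal.ofReal (Phi n γ w i p₁ q) * ENNReal.ofReal (Phi n γ w j p₂ q) *
        ENNReal.ofReal (q.1 ^ (3 - 2*γ + 2*((i:ℝ)+j))) ∂(muQ n) =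
      ENNReal.ofReal (1/2 * π ^ ((n:ℝ)/2) * Gamma (2+γ+i+j)) *
      ENNReal.ofReal (p₁.2 ^ (1+j) * p₂.2 ^ (1+i) *
        ((p₁.2 + p₂.2) ^ (-((n:ℝ)/2+2+γ+i+j)) * exp (-(‖p₁.1 - p₂.1‖^2/(p₁.2+p₂.2))) *
          w p₁.1 * w p₂.1)) := by
  obtain ⟨ξ₁, t₁⟩ := p₁
  obtain ⟨ξ₂, t₂⟩ := p₂
  simp only at h1 h2 ⊢
  have hw1 := hw0 ξ₁
  have hw2 := hw0 ξ₂
  set C := t₁ ^ (-(((n:ℝ) + 2*γ)/2 + i) - 1) * t₂ ^ (-(((n:ℝ) + 2*γ)/2 + j) - 1) * w ξ₁ * w ξ₂ with hC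
  have hC0 : 0 ≤ C := by positivity
  have hq : 0 < 1/t₁ + 1/t₂ := by positivity
  have hr : -1 < 3 + 2*γ+2*((i:ℝ)+j) := by
    have : (0:ℝ) ≤ 2*((i:ℝ)+j) := by positivity
    linarith
  calc _ = ∫⁻ q : ℝ × E, (ENNReal.ofReal (q.1 ^ (3 + 2*γ+2*((i:ℝ)+j)) * exp (-((1/t₁+1/t₂) * q.1^2)))) *
        (ENNReal.ofReal C * ENNReal.ofReal (exp (-(1/t₁ * ‖q.2 - ξ₁‖^2 + 1/t₂ * ‖q.2 - ξ₂‖^2)))) ∂(muQ n) := by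
        apply lintegral_congr_ae
        filter_upwards [muQ_pos] with q hq
        obtain ⟨y, x⟩ := q
        simp only at hq ⊢
        unfold Phi
        simp only
        rw [← ENNReal.ofReal_mul (by positivity), ← ENNReal.ofReal_mul (by positivity),
          ← ENNReal.ofReal_mul (by positivity), ← ENNReal.ofReal_mul (by positivity)]
        congr 1
        have e1 : y ^ (3 + 2*γ+2*((i:ℝ)+j)) = y ^ (2*γ) * y ^ (2*γ) * y ^ (3 - 2*γ+2*((i:ℝ)+j)) := by
          rw [← rpow_add hq, ← rpow_add hq]; congr 1; ring
        have e2 : exp (-((‖x - ξ₁‖ ^ 2 + y ^ 2) / t₁)) * exp (-((‖x - ξ₂‖ ^ 2 + y ^ 2) / t₂)) =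
          exp (-((1/t₁+1/t₂) * y^2)) * exp (-(1/t₁ * ‖x - ξ₁‖^2 + 1/t₂ * ‖x - ξ₂‖^2)) := by
          rw [← exp_add, ← exp_add]; congr 1; ring
        rw [e1, hC]
        linear_combination (y ^ (2*γ) * y ^ (2*γ) * y ^ (3 - 2*γ+2*((i:ℝ)+j)) * t₁ ^ (-(((n:ℝ) + 2*γ)/2 + i) - 1) * t₂ ^ (-(((n:ℝ) + 2*γ)/2 + j) - 1) * w ξ₁ * w ξ₂) * e2
    _ = _ := by
        unfold muQ
        rw [lintegral_prod_mul (f := fun y : ℝ => ENNReal.ofReal (y ^ (3 + 2*γ+2*((i:ℝ)+j)) * exp (-((1/t₁+1/t₂) * y^2))))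
          (g := fun x : E => (ENNReal.ofReal C * ENNReal.ofReal (exp (-(1/t₁ * ‖x - ξ₁‖^2 + 1/t₂ * ‖x - ξ₂‖^2)))))
          (by fun_prop) (by fun_prop), lint_y hr hq,
          lintegral_const_mul' _ _ (by simp), gauss2 (by positivity) (by positivity)]
        have hg : 0 < Gamma (2+γ+i+j) := Gamma_pos_of_pos (by positivity)
        have e0 : (3 + 2 * γ + 2 * ((i:ℝ) + j) + 1) / 2 = 2 + γ + i + j := by ring
        rw [e0, ← ENNReal.ofReal_mul (by positivity), ← ENNReal.ofReal_mul (by positivity),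
          ← ENNReal.ofReal_mul (by positivity)]
        congr 1
        have hT : 0 < t₁ + t₂ := by positivity
        have e3 : 1/t₁ + 1/t₂ = (t₁+t₂) * (t₁⁻¹ * t₂⁻¹) := by field_simp; ring
        have e4 : 1 / t₁ * (1 / t₂) / (1 / t₁ + 1 / t₂) * ‖ξ₁ - ξ₂‖ ^ 2 = ‖ξ₁ - ξ₂‖ ^ 2 / (t₁+t₂) := by
          field_simp; ring
        rw [e4, e3, hC, div_rpow (by positivity) (by positivity), div_eq_mul_inv (π ^ ((n:ℝ)/2)), ← rpow_neg (by positivity),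
          mul_rpow hT.le (by positivity), mul_rpow hT.le (by positivity), mul_rpow (by positivity) (by positivity),
          mul_rpow (by positivity) (by positivity), inv_rpow h1.le, inv_rpow h1.le, inv_rpow h2.le, inv_rpow h2.le,
          ← rpow_neg h1.le, ← rpow_neg h1.le, ← rpow_neg h2.le, ← rpow_neg h2.le]
        have f1 : t₁ ^ (1+j) = t₁ ^ (-(((n:ℝ) + 2*γ)/2 + i) - 1) * t₁ ^ (- -(2+γ+i+j)) * t₁ ^ (- -((n:ℝ)/2)) := by
          rw [← rpow_add h1, ← rpow_add h1, ← rpow_natCast]; congr 1; push_cast; ring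
        have f2 : t₂ ^ (1+i) = t₂ ^ (-(((n:ℝ) + 2*γ)/2 + j) - 1) * t₂ ^ (- -(2+γ+i+j)) * t₂ ^ (- -((n:ℝ)/2)) := by
          rw [← rpow_add h2, ← rpow_add h2, ← rpow_natCast]; congr 1; push_cast; ring
        have f3 : (t₁+t₂) ^ (-((n:ℝ)/2+2+γ+i+j)) = (t₁+t₂) ^ (-(2+γ+i+j)) * (t₁+t₂) ^ (-((n:ℝ)/2)) := by
          rw [← rpow_add hT]; congr 1; ring
        rw [f1, f2, f3]
        ring

noncomputable def DD (n : ℕ) (γ : ℝ) (w : EuclideanSpace ℝ (Fin n) → ℝ) : ℝ≥0∞ :=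
  ∫⁻ ξ₁, ∫⁻ ξ₂, ∫⁻ T in Set.Ioi (0:ℝ), 
    ENNReal.ofReal (T ^ (1-γ-(n:ℝ)/2) * exp (-(‖ξ₁ - ξ₂‖^2 / T)) * w ξ₁ * w ξ₂)

lemma X_eq (γ : ℝ) (hγ : 0 < γ) (w : E → ℝ) (hw : Measurable w) (hw0 : ∀ x, 0 ≤ w x) (i j : ℕ) (B : ℝ)
    (hB : ∀ T : ℝ, 0 < T → ∫ t in (0:ℝ)..T, t ^ (1+j) * (T - t) ^ (1+i) = B * T ^ (3+i+j)) :
    ENNReal.ofReal (Gamma (((n:ℝ) + 2*γ)/2 + i)) * ENNReal.ofReal (Gamma (((n:ℝ) + 2*γ)/2 + j)) *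
    ∫⁻ q : ℝ × E, (∫⁻ ξ, ENNReal.ofReal (ker n γ i q.1 (q.2 - ξ) * w ξ)) *
      (∫⁻ ξ, ENNReal.ofReal (ker n γ j q.1 (q.2 - ξ) * w ξ)) *
        ENNReal.ofReal (q.1 ^ (3 - 2*γ + 2*((i:ℝ)+j))) ∂(muQ n)
     = ENNReal.ofReal (1/2 * π ^ ((n:ℝ)/2) * Gamma (2+γ+i+j)) * ENNReal.ofReal B * DD n γ w := by
  have key := tonelli2 (nuP n) (muQ n) (fun p q => ENNReal.ofReal (Phi n γ w i p q))
    (fun p q => ENNReal.ofReal (Phi n γ w j p q)) (fun q => ENNReal.ofReal (q.1 ^ (3 - 2*γ + 2*((i:ℝ)+j))))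
    (Phi_meas γ w hw i) (Phi_meas γ w hw j) (by fun_prop)
  set A := ENNReal.ofReal (1/2 * π ^ ((n:ℝ)/2) * Gamma (2+γ+i+j)) with hA
  have hA' : A ≠ ∞ := by simp [hA]
  set R : E × ℝ → E × ℝ → ℝ≥0∞ := fun p₁ p₂ => ENNReal.ofReal (p₁.2 ^ (1+j) * p₂.2 ^ (1+i) *
        ((p₁.2 + p₂.2) ^ (-((n:ℝ)/2+2+γ+i+j)) * exp (-(‖p₁.1 - p₂.1‖^2/(p₁.2+p₂.2))) *
          w p₁.1 * w p₂.1)) with hR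
  have hRm : Measurable (Function.uncurry R) := by
    simp only [hR, Function.uncurry_def]; fun_prop
  have e1 : ∫⁻ p₁, ∫⁻ p₂, ∫⁻ q, ENNReal.ofReal (Phi n γ w i p₁ q) * ENNReal.ofReal (Phi n γ w j p₂ q) *
        ENNReal.ofReal (q.1 ^ (3 - 2*γ + 2*((i:ℝ)+j))) ∂(muQ n) ∂(nuP n) ∂(nuP n)
        = A * ∫⁻ p₁, ∫⁻ p₂, R p₁ p₂ ∂(nuP n) ∂(nuP n) := by
    rw [← lintegral_const_mul' _ _ hA']
    apply lintegral_congr_ae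
    filter_upwards [nuP_pos] with p₁ h1
    rw [← lintegral_const_mul' _ _ hA']
    apply lintegral_congr_ae
    filter_upwards [nuP_pos] with p₂ h2
    exact int_q γ hγ w hw0 i j p₁ p₂ h1 h2
  have e2 : ∫⁻ p₁, ∫⁻ p₂, R p₁ p₂ ∂(nuP n) ∂(nuP n) = ENNReal.ofReal B * DD n γ w := by
    have hm1 : Measurable (fun p₁ => ∫⁻ p₂, R p₁ p₂ ∂(nuP n)) := hRm.lintegral_prod_right'
    conv_lhs => unfold nuP
    unfold nuP at hm1
    rw [lintegral_prod _ hm1.aemeasurable]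
    unfold DD
    rw [← lintegral_const_mul' _ _ (by simp)]
    congr 1; ext ξ₁
    rw [← lintegral_const_mul' _ _ (by simp)]
    have : ∀ t₁ : ℝ, ∫⁻ p₂, R (ξ₁, t₁) p₂ ∂((volume : Measure E).prod ((volume : Measure ℝ).restrict (Set.Ioi 0)))
       = ∫⁻ ξ₂, ∫⁻ t₂ in Set.Ioi 0, R (ξ₁, t₁) (ξ₂, t₂) := by
      intro t₁
      rw [lintegral_prod]
      exact (hRm.comp measurable_prodMk_left).aemeasurable
    simp_rw [this]
    rw [lintegral_lintegral_swap]
    · congr 1; ext ξ₂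
      have := conv2 i j B (fun T => T ^ (-((n:ℝ)/2+2+γ+i+j)) * exp (-(‖ξ₁ - ξ₂‖^2/T)) * w ξ₁ * w ξ₂)
        (by fun_prop) (fun T hT => by have := hw0 ξ₁; have := hw0 ξ₂; positivity) hB
      simp only [hR]
      rw [this]
      congr 1
      apply setLIntegral_congr_fun measurableSet_Ioi
      intro T hT
      have hT : 0 < T := hT
      simp only
      congr 1
      have : T ^ (1-γ-(n:ℝ)/2) = T ^ (3+i+j) * T ^ (-((n:ℝ)/2+2+γ+i+j)) := by
        rw [← rpow_natCast, ← rpow_add hT]; congr 1; push_cast; ring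
      rw [this]; ring
    · apply Measurable.aemeasurable
      have hm2 : Measurable (fun p : (ℝ × E) × ℝ => R (ξ₁, p.1.1) (p.1.2, p.2)) :=
        hRm.comp (g := Function.uncurry R) (f := fun p : (ℝ × E) × ℝ => (((ξ₁, p.1.1), (p.1.2, p.2)) : (E × ℝ) × (E × ℝ))) (by fun_prop)
      exact hm2.lintegral_prod_right'
  rw [e1, e2] at key
  rw [mul_assoc A, ← key, ← lintegral_const_mul' _ _ (by finiteness)]
  apply lintegral_congr_ae
  filter_upwards [muQ_pos] with q hq
  rw [int_Phi γ hγ w hw hw0 i q hq, int_Phi γ hγ w hw hw0 j q hq]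
  ring

end main
end PX
namespace PX
section fin
variable {n : ℕ}
local notation "E" => EuclideanSpace ℝ (Fin n)

lemma inner_gauss (γ b : ℝ) (σ₁ σ₂ T : ℝ) (h1 : 0 < σ₁) (h2 : 0 < σ₂) (hT : 0 < T) :
    ∫⁻ ξ₁ : E, ∫⁻ ξ₂ : E, ENNReal.ofReal (σ₁ ^ (b-1) * exp (-((1+‖ξ₁‖^2) * σ₁))) *
      ENNReal.ofReal (σ₂ ^ (b-1) * exp (-((1+‖ξ₂‖^2) * σ₂))) *
      ENNReal.ofReal (T ^ (1-γ-(n:ℝ)/2) * exp (-(‖ξ₁ - ξ₂‖^2 / T)))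
    = ENNReal.ofReal (π ^ (n:ℝ) * (σ₁ ^ (b-1) * exp (-σ₁)) * (σ₂ ^ (b-1) * exp (-σ₂)) * T ^ (1-γ) *
       (σ₁ * σ₂ * T + σ₁ + σ₂) ^ (-((n:ℝ)/2))) := by
  set C := (σ₁ ^ (b-1) * exp (-σ₁)) * (σ₂ ^ (b-1) * exp (-σ₂)) * T ^ (1-γ-(n:ℝ)/2) with hC
  have hC0 : 0 < C := by positivity
  set κ := σ₂ * (1/T) / (σ₂ + 1/T) with hκ
  have hκ0 : 0 < κ := by positivity
  have e1 : ∀ ξ₁ : E, ∫⁻ ξ₂ : E, ENNReal.ofReal (σ₁ ^ (b-1) * exp (-((1+‖ξ₁‖^2) * σ₁))) *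
      ENNReal.ofReal (σ₂ ^ (b-1) * exp (-((1+‖ξ₂‖^2) * σ₂))) *
      ENNReal.ofReal (T ^ (1-γ-(n:ℝ)/2) * exp (-(‖ξ₁ - ξ₂‖^2 / T)))
      = ENNReal.ofReal (C * (π / (σ₂ + 1/T)) ^ ((n:ℝ)/2)) * ENNReal.ofReal (exp (-((σ₁ + κ) * ‖ξ₁‖^2))) := by
    intro ξ₁
    calc _ = ∫⁻ ξ₂ : E, ENNReal.ofReal (C * exp (-(σ₁ * ‖ξ₁‖^2))) *
        ENNReal.ofReal (exp (-(σ₂ * ‖ξ₂ - 0‖^2 + 1/T * ‖ξ₂ - ξ₁‖^2))) := by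
          congr 1; ext ξ₂
          rw [← ENNReal.ofReal_mul (by positivity), ← ENNReal.ofReal_mul (by positivity),
            ← ENNReal.ofReal_mul (by positivity)]
          congr 1
          have : exp (-((1+‖ξ₁‖^2) * σ₁)) * exp (-((1+‖ξ₂‖^2) * σ₂)) * exp (-(‖ξ₁ - ξ₂‖^2 / T))
            = exp (-σ₁) * exp (-σ₂) * exp (-(σ₁ * ‖ξ₁‖^2)) * exp (-(σ₂ * ‖ξ₂ - 0‖^2 + 1/T * ‖ξ₂ - ξ₁‖^2)) := by
            simp only [← exp_add]
            rw [norm_sub_rev ξ₁ ξ₂, sub_zero]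
            congr 1; ring
          rw [hC]
          linear_combination (σ₁ ^ (b-1) * σ₂ ^ (b-1) * T ^ (1-γ-(n:ℝ)/2)) * this
      _ = _ := by
          rw [lintegral_const_mul' _ _ (by simp), gauss2 h2 (by positivity),
            ← ENNReal.ofReal_mul (by positivity), ← ENNReal.ofReal_mul (by positivity)]
          congr 1
          rw [zero_sub, norm_neg, add_mul, neg_add, exp_add]
          ring
  simp_rw [e1]
  rw [lintegral_const_mul' _ _ (by simp), gauss1 (by positivity), ← ENNReal.ofReal_mul (by positivity)]
  congr 1
  have hM : 0 < σ₁ * σ₂ * T + σ₁ + σ₂ := by positivity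
  have e2 : π / (σ₂ + 1/T) * (π / (σ₁ + κ)) = π * π * T * (σ₁ * σ₂ * T + σ₁ + σ₂)⁻¹ := by
    have : (σ₂ + 1/T) * (σ₁ + κ) = (σ₁ * σ₂ * T + σ₁ + σ₂) / T := by
      rw [hκ]; field_simp
    rw [div_mul_div_comm, this]; field_simp
  rw [mul_assoc C, ← mul_rpow (by positivity) (by positivity), e2, mul_rpow (by positivity) (by positivity),
    mul_rpow (by positivity) (by positivity), mul_rpow pi_pos.le pi_pos.le, inv_rpow hM.le, ← rpow_neg hM.le,
    ← rpow_add pi_pos, hC]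
  have e3 : T ^ (1-γ) = T ^ (1-γ-(n:ℝ)/2) * T ^ ((n:ℝ)/2) := by
    rw [← rpow_add hT]; congr 1; ring
  rw [e3, add_halves]
  ring

lemma bnd (γ N α : ℝ) (hα : 0 ≤ α) (hα2 : α ≤ N/2) (σ₁ σ₂ T : ℝ) (h1 : 0 < σ₁) (h2 : 0 < σ₂) (hT : 0 < T) :
    π ^ N * (σ₁ ^ ((N-2*γ)/2-1) * exp (-σ₁)) * (σ₂ ^ ((N-2*γ)/2-1) * exp (-σ₂)) * T ^ (1-γ) *
       (σ₁ * σ₂ * T + σ₁ + σ₂) ^ (-(N/2)) ≤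
    (π ^ N * T ^ (1-γ-α)) * ((σ₁ ^ (N/4-γ-α/2-1) * exp (-(1*σ₁))) * (σ₂ ^ (N/4-γ-α/2-1) * exp (-(1*σ₂)))) := by
  have hM : 0 < σ₁ * σ₂ * T + σ₁ + σ₂ := by positivity
  have hb1 : (σ₁ * σ₂ * T + σ₁ + σ₂) ^ (-α) ≤ (σ₁ * σ₂ * T) ^ (-α) :=
    rpow_le_rpow_of_nonpos (by positivity) (by linarith) (by linarith)
  have hs : (σ₁ * σ₂) ^ (1/2:ℝ) ≤ σ₁ * σ₂ * T + σ₁ + σ₂ := by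
    have : (σ₁ * σ₂) ^ (1/2:ℝ) ≤ σ₁ + σ₂ := by
      rw [← sqrt_eq_rpow]
      apply sqrt_le_iff.2
      constructor
      · positivity
      · nlinarith [mul_pos h1 h2]
    have : 0 < σ₁ * σ₂ * T := by positivity
    linarith
  have hb2 : (σ₁ * σ₂ * T + σ₁ + σ₂) ^ (-(N/2-α)) ≤ ((σ₁ * σ₂) ^ (1/2:ℝ)) ^ (-(N/2-α)) :=
    rpow_le_rpow_of_nonpos (by positivity) hs (by linarith)
  have e0 : (σ₁ * σ₂ * T + σ₁ + σ₂) ^ (-(N/2)) = (σ₁ * σ₂ * T + σ₁ + σ₂) ^ (-α) * (σ₁ * σ₂ * T + σ₁ + σ₂) ^ (-(N/2-α)) := by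
    rw [← rpow_add hM]; congr 1; ring
  have hb : (σ₁ * σ₂ * T + σ₁ + σ₂) ^ (-(N/2)) ≤ σ₁ ^ (-N/4-α/2) * σ₂ ^ (-N/4-α/2) * T ^ (-α) := by
    rw [e0]
    refine (mul_le_mul hb1 hb2 (by positivity) (by positivity)).trans (le_of_eq ?_)
    rw [← rpow_mul (by positivity), mul_rpow (by positivity) hT.le, mul_rpow h1.le h2.le, mul_rpow h1.le h2.le]
    have f : ∀ s : ℝ, 0 < s → s ^ (-N/4-α/2) = s ^ (-α) * s ^ (1/2 * (-(N/2-α))) := by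
      intro s hs; rw [← rpow_add hs]; congr 1; ring
    rw [f _ h1, f _ h2]; ring
  refine (mul_le_mul_of_nonneg_left hb (by positivity)).trans (le_of_eq ?_)
  have f : ∀ s : ℝ, 0 < s → s ^ (N/4-γ-α/2-1) = s ^ ((N-2*γ)/2-1) * s ^ (-N/4-α/2) := by
    intro s hs; rw [← rpow_add hs]; congr 1; ring
  have g : T ^ (1-γ-α) = T ^ (1-γ) * T ^ (-α) := by
    rw [← rpow_add hT]; congr 1
  rw [f _ h1, f _ h2, g, one_mul, one_mul]; ring

lemma DD_fin (γ : ℝ) (hγ : γ ∈ Set.Ioo (0:ℝ) 1) (hn : 4 + 2*γ < (n:ℝ)) (w : E → ℝ)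
    (hw : ∀ x : E, w x = (1 + ‖x‖^2) ^ (-(((n:ℝ) - 2*γ)/2))) : DD n γ w < ∞ := by
  obtain ⟨hγ0, hγ1⟩ := hγ
  set b := ((n:ℝ) - 2*γ)/2 with hb
  have hb0 : 0 < b := by rw [hb]; linarith
  have hG : 0 < Gamma b := Gamma_pos_of_pos hb0
  have hwm : Measurable w := by
    have : w = fun x => (1 + ‖x‖^2) ^ (-b) := funext hw
    rw [this]; fun_prop
  set ρ := (volume : Measure ℝ).restrict (Set.Ioi 0) with hρ
  have key := tonelli2 ρ (((volume : Measure E).prod (volume : Measure E)).prod ρ)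
    (fun σ q => ENNReal.ofReal (σ ^ (b-1) * exp (-((1+‖q.1.1‖^2) * σ))))
    (fun σ q => ENNReal.ofReal (σ ^ (b-1) * exp (-((1+‖q.1.2‖^2) * σ))))
    (fun q => ENNReal.ofReal (q.2 ^ (1-γ-(n:ℝ)/2) * exp (-(‖q.1.1 - q.1.2‖^2 / q.2))))
    (by unfold Function.uncurry; fun_prop) (by unfold Function.uncurry; fun_prop) (by fun_prop)
  have hsig : ∀ x : E, ∫⁻ σ, ENNReal.ofReal (σ ^ (b-1) * exp (-((1+‖x‖^2) * σ))) ∂ρ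
      = ENNReal.ofReal (w x * Gamma b) := by
    intro x
    rw [hρ, lint_sigma hb0 (by positivity), hw]
  simp only [hsig] at key
  have e1 : ENNReal.ofReal (Gamma b * Gamma b) * DD n γ w = ∫⁻ q : (E × E) × ℝ, ENNReal.ofReal (w q.1.1 * Gamma b) *
      ENNReal.ofReal (w q.1.2 * Gamma b) * ENNReal.ofReal (q.2 ^ (1-γ-(n:ℝ)/2) * exp (-(‖q.1.1 - q.1.2‖^2 / q.2)))
      ∂(((volume : Measure E).prod (volume : Measure E)).prod ρ) := by
    have hm : Measurable (fun q : (E × E) × ℝ => ENNReal.ofReal (w q.1.1 * Gamma b) *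
      ENNReal.ofReal (w q.1.2 * Gamma b) * ENNReal.ofReal (q.2 ^ (1-γ-(n:ℝ)/2) * exp (-(‖q.1.1 - q.1.2‖^2 / q.2)))) := by
      fun_prop
    rw [lintegral_prod _ hm.aemeasurable, lintegral_prod _ hm.lintegral_prod_right'.aemeasurable]
    unfold DD
    rw [← lintegral_const_mul' _ _ (by simp)]
    congr 1; ext ξ₁
    rw [← lintegral_const_mul' _ _ (by simp)]
    congr 1; ext ξ₂
    rw [← lintegral_const_mul' _ _ (by simp)]
    apply setLIntegral_congr_fun measurableSet_Ioi
    intro T hT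
    have hT : 0 < T := hT
    have h1 : 0 ≤ w ξ₁ := by rw [hw]; positivity
    have h2 : 0 ≤ w ξ₂ := by rw [hw]; positivity
    simp only
    rw [← ENNReal.ofReal_mul (by positivity), ← ENNReal.ofReal_mul (by positivity), ← ENNReal.ofReal_mul (by positivity)]
    congr 1; ring
  rw [← e1] at key
  suffices h : ENNReal.ofReal (Gamma b * Gamma b) * DD n γ w < ∞ by
    by_contra hc
    rw [not_lt, top_le_iff] at hc
    rw [hc, ENNReal.mul_top] at h
    · exact lt_irrefl _ h
    · simp; positivity
  rw [key]
  set δ := (n:ℝ)/2 - 2 - γ with hδ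
  have hδ0 : 0 < δ := by rw [hδ]; linarith
  set ε := min 1 (δ/2) with hε
  have hε0 : 0 < ε := by positivity
  have hε1 : ε ≤ 1 := min_le_left _ _
  have hε2 : ε ≤ δ/2 := min_le_right _ _
  set K₁ := ∫⁻ T in Set.Ioc (0:ℝ) 1, ENNReal.ofReal (π ^ (n:ℝ) * T ^ (1-γ-(2-γ-ε))) with hK1
  set K₂ := ∫⁻ T in Set.Ioi (1:ℝ), ENNReal.ofReal (π ^ (n:ℝ) * T ^ (1-γ-(2-γ+ε))) with hK2
  have hK1' : K₁ < ∞ := by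
    apply Integrable.lintegral_lt_top
    apply Integrable.const_mul
    exact (intervalIntegral.intervalIntegrable_rpow' (by linarith) (a := 0) (b := 1)).1
  have hK2' : K₂ < ∞ := by
    apply Integrable.lintegral_lt_top
    apply Integrable.const_mul
    exact integrableOn_Ioi_rpow_of_lt (by linarith) one_pos
  set G : ℝ → ℝ → ℝ≥0∞ := fun α σ => ENNReal.ofReal (σ ^ ((n:ℝ)/4-γ-α/2-1) * exp (-(1*σ))) with hGdef
  have hGm : ∀ α, Measurable (G α) := by intro α; simp only [hGdef]; fun_prop
  have hGf : ∀ α, 0 < (n:ℝ)/4-γ-α/2 → ∫⁻ σ, G α σ ∂ρ < ∞ := by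
    intro α hα
    simp only [hGdef, hρ]
    rw [lint_sigma hα one_pos]
    simp
  have step : ∀ σ₁, 0 < σ₁ → ∀ σ₂, 0 < σ₂ →
      ∫⁻ q : (E × E) × ℝ, ENNReal.ofReal (σ₁ ^ (b-1) * exp (-((1+‖q.1.1‖^2) * σ₁))) *
      ENNReal.ofReal (σ₂ ^ (b-1) * exp (-((1+‖q.1.2‖^2) * σ₂))) *
      ENNReal.ofReal (q.2 ^ (1-γ-(n:ℝ)/2) * exp (-(‖q.1.1 - q.1.2‖^2 / q.2))) 
        ∂(((volume : Measure E).prod (volume : Measure E)).prod ρ)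
      ≤ K₁ * (G (2-γ-ε) σ₁ * G (2-γ-ε) σ₂) + K₂ * (G (2-γ+ε) σ₁ * G (2-γ+ε) σ₂) := by
    intro σ₁ h1 σ₂ h2
    have hm : Measurable (fun q : (E × E) × ℝ => ENNReal.ofReal (σ₁ ^ (b-1) * exp (-((1+‖q.1.1‖^2) * σ₁))) *
      ENNReal.ofReal (σ₂ ^ (b-1) * exp (-((1+‖q.1.2‖^2) * σ₂))) *
      ENNReal.ofReal (q.2 ^ (1-γ-(n:ℝ)/2) * exp (-(‖q.1.1 - q.1.2‖^2 / q.2)))) := by fun_prop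
    rw [lintegral_prod_symm _ hm.aemeasurable]
    have e : ∀ T ∈ Set.Ioi (0:ℝ), ∫⁻ x : E × E, ENNReal.ofReal (σ₁ ^ (b-1) * exp (-((1+‖x.1‖^2) * σ₁))) *
      ENNReal.ofReal (σ₂ ^ (b-1) * exp (-((1+‖x.2‖^2) * σ₂))) *
      ENNReal.ofReal (T ^ (1-γ-(n:ℝ)/2) * exp (-(‖x.1 - x.2‖^2 / T))) ∂((volume : Measure E).prod (volume : Measure E))
      = ENNReal.ofReal (π ^ (n:ℝ) * (σ₁ ^ (b-1) * exp (-σ₁)) * (σ₂ ^ (b-1) * exp (-σ₂)) * T ^ (1-γ) *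
       (σ₁ * σ₂ * T + σ₁ + σ₂) ^ (-((n:ℝ)/2))) := by
      intro T hT
      rw [← inner_gauss γ b σ₁ σ₂ T h1 h2 hT, lintegral_prod]
      exact (hm.comp (measurable_prodMk_right (y := T))).aemeasurable
    rw [hρ, setLIntegral_congr_fun measurableSet_Ioi e]
    have hun : Set.Ioi (0:ℝ) = Set.Ioc 0 1 ∪ Set.Ioi 1 := (Set.Ioc_union_Ioi_eq_Ioi zero_le_one).symm
    rw [hun]
    refine (lintegral_union_le _ _ _).trans ?_
    apply add_le_add
    · rw [hK1, ← lintegral_mul_const' _ _ (by finiteness)]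
      apply setLIntegral_mono' measurableSet_Ioc
      intro T hT
      have hT0 := hT.1
      simp only [hGdef]
      rw [← ENNReal.ofReal_mul (by positivity), ← ENNReal.ofReal_mul (by positivity)]
      apply ENNReal.ofReal_le_ofReal
      exact bnd γ n (2-γ-ε) (by linarith) (by linarith) σ₁ σ₂ T h1 h2 hT0
    · rw [hK2, ← lintegral_mul_const' _ _ (by finiteness)]
      apply setLIntegral_mono' measurableSet_Ioi
      intro T hT
      have hT0 : 0 < T := lt_trans one_pos hT
      simp only [hGdef]
      rw [← ENNReal.ofReal_mul (by positivity), ← ENNReal.ofReal_mul (by positivity)]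
      apply ENNReal.ofReal_le_ofReal
      exact bnd γ n (2-γ+ε) (by linarith) (by linarith) σ₁ σ₂ T h1 h2 hT0
  have hf1 := hGf (2-γ-ε) (by linarith)
  have hf2 := hGf (2-γ+ε) (by linarith)
  calc _ ≤ ∫⁻ σ₁, ∫⁻ σ₂, (K₁ * (G (2-γ-ε) σ₁ * G (2-γ-ε) σ₂) + K₂ * (G (2-γ+ε) σ₁ * G (2-γ+ε) σ₂)) ∂ρ ∂ρ := by
        apply setLIntegral_mono' measurableSet_Ioi
        intro σ₁ h1
        apply setLIntegral_mono' measurableSet_Ioi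
        intro σ₂ h2
        exact step σ₁ h1 σ₂ h2
    _ = K₁ * ((∫⁻ σ, G (2-γ-ε) σ ∂ρ) * (∫⁻ σ, G (2-γ-ε) σ ∂ρ)) + K₂ * ((∫⁻ σ, G (2-γ+ε) σ ∂ρ) * (∫⁻ σ, G (2-γ+ε) σ ∂ρ)) := by
        have : ∀ σ₁, ∫⁻ σ₂, (K₁ * (G (2-γ-ε) σ₁ * G (2-γ-ε) σ₂) + K₂ * (G (2-γ+ε) σ₁ * G (2-γ+ε) σ₂)) ∂ρ
           = K₁ * (G (2-γ-ε) σ₁ * ∫⁻ σ, G (2-γ-ε) σ ∂ρ) + K₂ * (G (2-γ+ε) σ₁ * ∫⁻ σ, G (2-γ+ε) σ ∂ρ) := by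
          intro σ₁
          rw [lintegral_add_left (by fun_prop), lintegral_const_mul' _ _ hK1'.ne, lintegral_const_mul' _ _ hK2'.ne,
            lintegral_const_mul _ (hGm _), lintegral_const_mul _ (hGm _)]
        simp_rw [this]
        rw [lintegral_add_left (by fun_prop), lintegral_const_mul' _ _ hK1'.ne, lintegral_const_mul' _ _ hK2'.ne,
            lintegral_mul_const _ (hGm _), lintegral_mul_const _ (hGm _)]
    _ < ∞ := by finiteness

end fin
end PX
namespace PX
section last
variable {n : ℕ}
local notation "E" => EuclideanSpace ℝ (Fin n)

lemma kint (c r : ℝ) (hc : 0 < c) (hr : (n:ℝ)/2 < r) :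
    Integrable (fun z : E => (‖z‖^2 + c^2) ^ (-r)) := by
  have h0 : Integrable (fun z : E => ((1:ℝ) + ‖z‖^2) ^ (-(2*r)/2)) :=
    integrable_rpow_neg_one_add_norm_sq (by simp; linarith)
  have hr0 : 0 < r := lt_of_le_of_lt (by positivity) hr
  set m := min 1 (c^2) with hm
  have hm0 : 0 < m := by positivity
  refine (h0.const_mul (m ^ (-r))).mono' (Measurable.aestronglyMeasurable (by fun_prop)) ?_
  filter_upwards with z
  rw [norm_of_nonneg (by positivity), show -(2*r)/2 = -r by ring, ← mul_rpow hm0.le (by positivity)]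
  apply rpow_le_rpow_of_nonpos (by positivity) _ (by linarith)
  have h1 : m ≤ 1 := min_le_left _ _
  have h2 : m ≤ c^2 := min_le_right _ _
  nlinarith [sq_nonneg ‖z‖]

lemma kint' (c r : ℝ) (hc : 0 < c) (hr : (n:ℝ)/2 < r) (x : E) :
    Integrable (fun ξ : E => (‖x - ξ‖^2 + c^2) ^ (-r)) :=
  (kint c r hc hr).comp_sub_left x

noncomputable def VV (n : ℕ) (γ : ℝ) (w : EuclideanSpace ℝ (Fin n) → ℝ) (i : ℕ)
    (x : EuclideanSpace ℝ (Fin n)) (y : ℝ) : ℝ := ∫ ξ, ker n γ i y (x - ξ) * w ξ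

lemma ker_int (γ : ℝ) (hγ : 0 < γ) (w : E → ℝ) (hw : Measurable w) (hw0 : ∀ x, 0 ≤ w x) (hw1 : ∀ x, w x ≤ 1)
    (i : ℕ) (x : E) (y : ℝ) (hy : 0 < y) : Integrable (fun ξ => ker n γ i y (x - ξ) * w ξ) := by
  have h := (kint' y (((n:ℝ) + 2*γ)/2 + i) hy (by have : (0:ℝ) ≤ i := by positivity
                                                  linarith) x).const_mul (y^(2*γ))
  refine h.mono' (by unfold ker; fun_prop) ?_
  filter_upwards with ξ
  have := hw0 ξ
  unfold ker
  rw [norm_of_nonneg (by positivity)]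
  exact mul_le_of_le_one_right (by positivity) (hw1 ξ)

lemma ker_deriv (γ : ℝ) (z : E) (y : ℝ) (hy : 0 < y) :
    HasDerivAt (fun y => ker n γ 0 y z)
      (2*γ/y * ker n γ 0 y z - 2 * (((n:ℝ) + 2*γ)/2) * y * ker n γ 1 y z) y := by
  unfold ker
  have hp : 0 < ‖z‖^2 + y^2 := by positivity
  have h1 : HasDerivAt (fun y : ℝ => y ^ (2*γ)) ((2*γ) * y ^ (2*γ-1)) y :=
    hasDerivAt_rpow_const (Or.inl hy.ne')
  have h2 : HasDerivAt (fun y : ℝ => ‖z‖^2 + y^2) (2*y) y := by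
    simpa using (hasDerivAt_pow 2 y).const_add (‖z‖^2)
  have h3 := h2.rpow_const (p := -(((n:ℝ) + 2*γ)/2 + (0:ℕ))) (Or.inl hp.ne')
  convert! h1.mul h3 using 1
  have e1 : y ^ (2*γ-1) = y^(2*γ) / y := by rw [rpow_sub_one hy.ne']
  have e2 : -(((n:ℝ) + 2*γ)/2 + (1:ℕ)) = -(((n:ℝ) + 2*γ)/2 + (0:ℕ)) - 1 := by push_cast; ring
  rw [e1, e2]
  push_cast
  ring

lemma V_deriv (γ : ℝ) (hγ : 0 < γ) (w : E → ℝ) (hw : Measurable w) (hw0 : ∀ x, 0 ≤ w x) (hw1 : ∀ x, w x ≤ 1)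
    (x : E) (y : ℝ) (hy : 0 < y) :
    HasDerivAt (VV n γ w 0 x) (2*γ/y * VV n γ w 0 x y - 2 * (((n:ℝ) + 2*γ)/2) * y * VV n γ w 1 x y) y := by
  set s := ((n:ℝ) + 2*γ)/2 with hs
  have hs0 : 0 < s := by positivity
  have hI0 := ker_int γ hγ w hw hw0 hw1 0 x y hy
  have hI1 := ker_int γ hγ w hw hw0 hw1 1 x y hy
  have hy2 : 0 < y/2 := by positivity
  set C := (3*y/2)^(2*γ) with hC
  have hC0 : 0 < C := by positivity
  have key := hasDerivAt_integral_of_dominated_loc_of_deriv_le (μ := (volume : Measure E))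
    (s := Metric.ball y (y/2)) (x₀ := y) (F := fun y ξ => ker n γ 0 y (x - ξ) * w ξ)
    (F' := fun y ξ => (2*γ/y * ker n γ 0 y (x-ξ) - 2 * s * y * ker n γ 1 y (x-ξ)) * w ξ)
    (bound := fun ξ => (2*γ/(y/2) * C) * (‖x - ξ‖^2 + (y/2)^2) ^ (-(s + (0:ℕ))) +
      (2 * s * (3*y/2) * C) * (‖x - ξ‖^2 + (y/2)^2) ^ (-(s + (1:ℕ))))
    (Metric.ball_mem_nhds y hy2) (by filter_upwards with y; unfold ker; fun_prop) hI0
    (by unfold ker; fun_prop) ?_ ?_ ?_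
  · have h := key.2
    have e : ∫ ξ, (2*γ/y * ker n γ 0 y (x-ξ) - 2 * s * y * ker n γ 1 y (x-ξ)) * w ξ
       = 2*γ/y * VV n γ w 0 x y - 2 * s * y * VV n γ w 1 x y := by
      unfold VV
      rw [← integral_const_mul, ← integral_const_mul, ← integral_sub (hI0.const_mul _) (hI1.const_mul _)]
      congr 1; ext ξ; ring
    rw [e] at h
    exact h
  · filter_upwards with ξ
    intro u hu
    rw [Metric.mem_ball, Real.dist_eq, abs_lt] at hu
    have hu1 : y/2 ≤ u := by linarith [hu.1]
    have hu2 : u ≤ 3*y/2 := by linarith [hu.2]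
    have hu0 : 0 < u := by linarith
    have hker : ∀ i : ℕ, 0 ≤ ker n γ i u (x-ξ) ∧ ker n γ i u (x-ξ) ≤ C * (‖x - ξ‖^2 + (y/2)^2) ^ (-(s + i)) := by
      intro i
      unfold ker
      refine ⟨by positivity, ?_⟩
      apply mul_le_mul _ _ (by positivity) (by positivity)
      · exact rpow_le_rpow hu0.le hu2 (by positivity)
      · apply rpow_le_rpow_of_nonpos (by positivity)
        · gcongr
        · rw [neg_nonpos]; positivity
    obtain ⟨a0, b0⟩ := hker 0
    obtain ⟨a1, b1⟩ := hker 1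
    rw [norm_mul, norm_of_nonneg (hw0 ξ)]
    refine (mul_le_of_le_one_right (norm_nonneg _) (hw1 ξ)).trans ?_
    refine (norm_sub_le _ _).trans ?_
    rw [norm_of_nonneg (by positivity), norm_of_nonneg (by positivity), mul_assoc (2*γ/(y/2)), mul_assoc (2*s*(3*y/2))]
    gcongr
  · apply Integrable.add
    · exact (kint' (y/2) _ hy2 (by rw [hs]; push_cast; linarith) x).const_mul _
    · exact (kint' (y/2) _ hy2 (by rw [hs]; push_cast; linarith) x).const_mul _
  · filter_upwards with ξ
    intro u hu
    rw [Metric.mem_ball, Real.dist_eq, abs_lt] at hu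
    have hu0 : 0 < u := by linarith [hu.1]
    exact (ker_deriv γ (x-ξ) u hu0).mul_const (w ξ)

lemma X_real (γ : ℝ) (hγ : 0 < γ) (w : E → ℝ) (hw : Measurable w) (hw0 : ∀ x, 0 ≤ w x) (hw1 : ∀ x, w x ≤ 1)
    (hD : DD n γ w < ∞) (i j : ℕ) (B : ℝ) (hB0 : 0 ≤ B)
    (hB : ∀ T : ℝ, 0 < T → ∫ t in (0:ℝ)..T, t ^ (1+j) * (T - t) ^ (1+i) = B * T ^ (3+i+j)) :
    Integrable (fun q : ℝ × E => VV n γ w i q.2 q.1 * VV n γ w j q.2 q.1 * q.1 ^ (3 - 2*γ + 2*((i:ℝ)+j))) (muQ n) ∧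
    Gamma (((n:ℝ) + 2*γ)/2 + i) * Gamma (((n:ℝ) + 2*γ)/2 + j) *
      ∫ q : ℝ × E, VV n γ w i q.2 q.1 * VV n γ w j q.2 q.1 * q.1 ^ (3 - 2*γ + 2*((i:ℝ)+j)) ∂(muQ n)
    = (1/2 * π ^ ((n:ℝ)/2) * Gamma (2+γ+i+j)) * B * (DD n γ w).toReal := by
  have hX := X_eq γ hγ w hw hw0 i j B hB
  have hVm : ∀ i : ℕ, StronglyMeasurable (fun q : ℝ × E => VV n γ w i q.2 q.1) := by
    intro i
    have : Measurable (fun p : (ℝ × E) × E => ker n γ i p.1.1 (p.1.2 - p.2) * w p.2) := by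
      unfold ker; fun_prop
    exact this.stronglyMeasurable.integral_prod_right'
  have hV0 : ∀ (i : ℕ) (x : E) (y : ℝ), 0 < y → 0 ≤ VV n γ w i x y := by
    intro i x y hy
    apply integral_nonneg
    intro ξ
    have := hw0 ξ
    unfold ker
    simp only [Pi.zero_apply]
    positivity
  have hVl : ∀ (i : ℕ) (x : E) (y : ℝ), 0 < y → 
      ∫⁻ ξ, ENNReal.ofReal (ker n γ i y (x - ξ) * w ξ) = ENNReal.ofReal (VV n γ w i x y) := by
    intro i x y hy
    unfold VV
    rw [ofReal_integral_eq_lintegral_ofReal (ker_int γ hγ w hw hw0 hw1 i x y hy)]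
    filter_upwards with ξ
    have := hw0 ξ
    unfold ker
    simp only [Pi.zero_apply]
    positivity
  set f := (fun q : ℝ × E => VV n γ w i q.2 q.1 * VV n γ w j q.2 q.1 * q.1 ^ (3 - 2*γ + 2*((i:ℝ)+j))) with hf
  have hfm : AEStronglyMeasurable f (muQ n) := by
    apply Measurable.aestronglyMeasurable
    have h1 := (hVm i).measurable
    have h2 := (hVm j).measurable
    simp only [hf]
    fun_prop
  have hf0 : 0 ≤ᵐ[muQ n] f := by
    filter_upwards [muQ_pos] with q hq
    have := hV0 i q.2 q.1 hq
    have := hV0 j q.2 q.1 hq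
    simp only [hf, Pi.zero_apply]
    positivity
  have hlf : ∫⁻ q : ℝ × E, (∫⁻ ξ, ENNReal.ofReal (ker n γ i q.1 (q.2 - ξ) * w ξ)) *
      (∫⁻ ξ, ENNReal.ofReal (ker n γ j q.1 (q.2 - ξ) * w ξ)) *
        ENNReal.ofReal (q.1 ^ (3 - 2*γ + 2*((i:ℝ)+j))) ∂(muQ n) = ∫⁻ q, ENNReal.ofReal (f q) ∂(muQ n) := by
    apply lintegral_congr_ae
    filter_upwards [muQ_pos] with q hq
    have h1 := hV0 i q.2 q.1 hq
    have h2 := hV0 j q.2 q.1 hq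
    rw [hVl i q.2 q.1 hq, hVl j q.2 q.1 hq, ← ENNReal.ofReal_mul h1, ← ENNReal.ofReal_mul (by positivity)]
  rw [hlf] at hX
  have hg1 : 0 < Gamma (((n:ℝ) + 2*γ)/2 + i) := Gamma_pos_of_pos (by positivity)
  have hg2 : 0 < Gamma (((n:ℝ) + 2*γ)/2 + j) := Gamma_pos_of_pos (by positivity)
  have hg3 : 0 < Gamma (2+γ+i+j) := Gamma_pos_of_pos (by positivity)
  have hfin : ∫⁻ q, ENNReal.ofReal (f q) ∂(muQ n) < ∞ := by
    by_contra hc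
    rw [not_lt, top_le_iff] at hc
    rw [hc, ENNReal.mul_top] at hX
    · have : ENNReal.ofReal (1/2 * π ^ ((n:ℝ)/2) * Gamma (2+γ+i+j)) * ENNReal.ofReal B * DD n γ w < ∞ := by finiteness
      rw [← hX] at this
      exact lt_irrefl _ this
    · simp [hg1, hg2]
  have hfI : Integrable f (muQ n) := ⟨hfm, (hasFiniteIntegral_iff_ofReal hf0).2 hfin⟩
  refine ⟨hfI, ?_⟩
  rw [integral_eq_lintegral_of_nonneg_ae hf0 hfm]
  have := congrArg ENNReal.toReal hX
  simp only [ENNReal.toReal_mul] at this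
  rw [ENNReal.toReal_ofReal hg1.le, ENNReal.toReal_ofReal hg2.le, ENNReal.toReal_ofReal hB0,
    ENNReal.toReal_ofReal (by positivity)] at this
  exact this

lemma B00 (T : ℝ) : ∫ t in (0:ℝ)..T, t ^ (1+0) * (T - t) ^ (1+0) = (1/6) * T ^ (3+0+0) := by
  rw [intervalIntegral.integral_eq_sub_of_hasDerivAt (f := fun t => T * (t^2 / 2) - t^3/3)
    (fun t _ => ?_) (Continuous.intervalIntegrable (by fun_prop) _ _)]
  · ring
  · convert! (((hasDerivAt_pow 2 t).div_const 2).const_mul T).sub ((hasDerivAt_pow 3 t).div_const 3) using 1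
    norm_num; ring

lemma B01 (T : ℝ) : ∫ t in (0:ℝ)..T, t ^ (1+1) * (T - t) ^ (1+0) = (1/12) * T ^ (3+0+1) := by
  rw [intervalIntegral.integral_eq_sub_of_hasDerivAt (f := fun t => T * (t^3 / 3) - t^4/4)
    (fun t _ => ?_) (Continuous.intervalIntegrable (by fun_prop) _ _)]
  · ring
  · convert! (((hasDerivAt_pow 3 t).div_const 3).const_mul T).sub ((hasDerivAt_pow 4 t).div_const 4) using 1
    norm_num; ring

lemma B11 (T : ℝ) : ∫ t in (0:ℝ)..T, t ^ (1+1) * (T - t) ^ (1+1) = (1/30) * T ^ (3+1+1) := by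
  rw [intervalIntegral.integral_eq_sub_of_hasDerivAt (f := fun t => T^2 * (t^3 / 3) - (2*T) * (t^4/4) + t^5/5)
    (fun t _ => ?_) (Continuous.intervalIntegrable (by fun_prop) _ _)]
  · ring
  · convert! ((((hasDerivAt_pow 3 t).div_const 3).const_mul (T^2)).sub (((hasDerivAt_pow 4 t).div_const 4).const_mul (2*T))).add ((hasDerivAt_pow 5 t).div_const 5) using 1
    norm_num; ring

end last
end PX

open MeasureTheory Real in
theorem stmt_14 (γ : ℝ) (hγ : γ ∈ Set.Ioo (0:ℝ) 1) (a : ℝ) (ha : a = 1 - 2*γ)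
    (n : ℕ) (hn : 4 + 2*γ < (n:ℝ))
    (w : EuclideanSpace ℝ (Fin n) → ℝ)
    (hw : ∀ x : EuclideanSpace ℝ (Fin n), w x = (1 + ‖x‖^2) ^ (-(((n:ℝ) - 2*γ)/2)))
    (U : EuclideanSpace ℝ (Fin n) → ℝ → ℝ)
    (hU : ∀ x : EuclideanSpace ℝ (Fin n), ∀ y : ℝ,
      U x y = ∫ ξ : EuclideanSpace ℝ (Fin n),
        y ^ (2*γ) * (‖x - ξ‖^2 + y^2) ^ (-(((n:ℝ) + 2*γ)/2)) * w ξ) :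
    ∫ y in Set.Ioi (0:ℝ), ∫ x : EuclideanSpace ℝ (Fin n),
      y ^ (a+4) * (deriv (U x) y)^2 =
    ((a+5)*(a+3)/5) * ∫ y in Set.Ioi (0:ℝ), ∫ x : EuclideanSpace ℝ (Fin n),
      y ^ (a+2) * (U x y)^2 := by
  have hγ0 := hγ.1
  have hD := PX.DD_fin γ hγ hn w hw
  have hwm : Measurable w := by
    have : w = fun x => (1 + ‖x‖^2) ^ (-(((n:ℝ) - 2*γ)/2)) := funext hw
    rw [this]; fun_prop
  have hw0 : ∀ x, 0 ≤ w x := fun x => by rw [hw]; positivity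
  have hw1 : ∀ x, w x ≤ 1 := fun x => by
    rw [hw]
    apply rpow_le_one_of_one_le_of_nonpos
    · nlinarith [sq_nonneg ‖x‖]
    · linarith
  have hUV : U = PX.VV n γ w 0 := by
    ext x y
    rw [hU]
    unfold PX.VV PX.ker
    simp
  obtain ⟨i00, x00⟩ := PX.X_real γ hγ0 w hwm hw0 hw1 hD 0 0 (1/6) (by norm_num) (fun T _ => PX.B00 T)
  obtain ⟨i01, x01⟩ := PX.X_real γ hγ0 w hwm hw0 hw1 hD 0 1 (1/12) (by norm_num) (fun T _ => PX.B01 T)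
  obtain ⟨i11, x11⟩ := PX.X_real γ hγ0 w hwm hw0 hw1 hD 1 1 (1/30) (by norm_num) (fun T _ => PX.B11 T)
  set s := ((n:ℝ) + 2*γ)/2 with hs
  have hs0 : 0 < s := by positivity
  set f00 := fun q : ℝ × EuclideanSpace ℝ (Fin n) => PX.VV n γ w 0 q.2 q.1 * PX.VV n γ w 0 q.2 q.1 * q.1 ^ (3 - 2*γ + 2*(((0:ℕ):ℝ)+(0:ℕ))) with hf00
  set f01 := fun q : ℝ × EuclideanSpace ℝ (Fin n) => PX.VV n γ w 0 q.2 q.1 * PX.VV n γ w 1 q.2 q.1 * q.1 ^ (3 - 2*γ + 2*(((0:ℕ):ℝ)+(1:ℕ))) with hf01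
  set f11 := fun q : ℝ × EuclideanSpace ℝ (Fin n) => PX.VV n γ w 1 q.2 q.1 * PX.VV n γ w 1 q.2 q.1 * q.1 ^ (3 - 2*γ + 2*(((1:ℕ):ℝ)+(1:ℕ))) with hf11
  have hR : ∀ᵐ q ∂(PX.muQ n), f00 q = q.1 ^ (a+2) * (U q.2 q.1)^2 := by
    filter_upwards with q
    rw [hf00, hUV, ha]
    simp only
    rw [show 3 - 2*γ + 2*(((0:ℕ):ℝ)+(0:ℕ)) = 1 - 2*γ+2 by push_cast; ring]
    ring
  have hL : ∀ᵐ q ∂(PX.muQ n), 4*γ^2 * f00 q - 8*γ*s * f01 q + 4*s^2 * f11 q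
      = q.1 ^ (a+4) * (deriv (U q.2) q.1)^2 := by
    filter_upwards [PX.muQ_pos] with q hq
    rw [hUV, (PX.V_deriv γ hγ0 w hwm hw0 hw1 q.2 q.1 hq).deriv, ha]
    simp only [hf00, hf01, hf11]
    have e0 : q.1 ^ (1-2*γ+4) = q.1 ^ (3 - 2*γ + 2*(((0:ℕ):ℝ)+(0:ℕ))) * q.1^2 := by
      rw [← rpow_natCast, ← rpow_add hq]; congr 1; push_cast; ring
    have e1 : q.1 ^ (3 - 2*γ + 2*(((0:ℕ):ℝ)+(1:ℕ))) = q.1 ^ (3 - 2*γ + 2*(((0:ℕ):ℝ)+(0:ℕ))) * q.1^2 := by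
      rw [← rpow_natCast, ← rpow_add hq]; congr 1; push_cast; ring
    have e2 : q.1 ^ (3 - 2*γ + 2*(((1:ℕ):ℝ)+(1:ℕ))) = q.1 ^ (3 - 2*γ + 2*(((0:ℕ):ℝ)+(0:ℕ))) * q.1^4 := by
      rw [← rpow_natCast, ← rpow_add hq]; congr 1; push_cast; ring
    rw [e0, e1, e2]
    rw [← hs]
    field_simp
    ring
  have iL : Integrable (fun q => 4*γ^2 * f00 q - 8*γ*s * f01 q + 4*s^2 * f11 q) (PX.muQ n) :=
    ((i00.const_mul _).sub (i01.const_mul _)).add (i11.const_mul _)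
  have i2 : Integrable (fun q => 4*γ^2 * f00 q - 8*γ*s * f01 q) (PX.muQ n) :=
    (i00.const_mul _).sub (i01.const_mul _)
  have IL : ∫ y in Set.Ioi (0:ℝ), ∫ x : EuclideanSpace ℝ (Fin n), y ^ (a+4) * (deriv (U x) y)^2
      = 4*γ^2 * (∫ q, f00 q ∂(PX.muQ n)) - 8*γ*s * (∫ q, f01 q ∂(PX.muQ n)) + 4*s^2 * (∫ q, f11 q ∂(PX.muQ n)) := by
    have h := (integral_prod _ (iL.congr hL)).symm
    simp only at h
    rw [h]
    change ∫ q, q.1 ^ (a+4) * (deriv (U q.2) q.1)^2 ∂(PX.muQ n) = _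
    rw [← integral_congr_ae hL, integral_add i2 (i11.const_mul _),
      integral_sub (i00.const_mul _) (i01.const_mul _), integral_const_mul, integral_const_mul, integral_const_mul]
  have IR : ∫ y in Set.Ioi (0:ℝ), ∫ x : EuclideanSpace ℝ (Fin n), y ^ (a+2) * (U x y)^2
      = ∫ q, f00 q ∂(PX.muQ n) := by
    have h := (integral_prod _ (i00.congr hR)).symm
    simp only at h
    rw [h]
    change ∫ q, q.1 ^ (a+2) * (U q.2 q.1)^2 ∂(PX.muQ n) = _
    rw [← integral_congr_ae hR]
  rw [IL, IR]
  have hG : 0 < Gamma s := Gamma_pos_of_pos hs0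
  have hG1 : Gamma (s + (1:ℕ)) = s * Gamma s := by push_cast; exact Gamma_add_one hs0.ne'
  have g1 : Gamma (2 + γ + (0:ℕ) + (1:ℕ)) = (2+γ) * Gamma (2+γ) := by
    push_cast; rw [add_zero]; exact Gamma_add_one (by positivity)
  have g2 : Gamma (2 + γ + (1:ℕ) + (1:ℕ)) = (3+γ) * ((2+γ) * Gamma (2+γ)) := by
    push_cast
    rw [Gamma_add_one (by positivity), Gamma_add_one (by positivity)]; ring
  have g0 : Gamma (2 + γ + (0:ℕ) + (0:ℕ)) = Gamma (2+γ) := by simp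
  have g00 : Gamma (s + (0:ℕ)) = Gamma s := by simp
  rw [g00, g0] at x00
  rw [g00, hG1, g1] at x01
  rw [hG1, g2] at x11
  set M := 1/2 * π ^ ((n:ℝ)/2) * Gamma (2+γ) * (PX.DD n γ w).toReal with hM
  have y00 : ∫ q, f00 q ∂(PX.muQ n) = M / (6 * Gamma s ^ 2) := by
    rw [eq_div_iff (by positivity), hM]; linear_combination 6 * x00
  have y01 : s * ∫ q, f01 q ∂(PX.muQ n) = (2+γ) * M / (12 * Gamma s ^ 2) := by
    rw [eq_div_iff (by positivity), hM]; linear_combination 12 * x01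
  have y11 : s^2 * ∫ q, f11 q ∂(PX.muQ n) = (3+γ) * (2+γ) * M / (30 * Gamma s ^ 2) := by
    rw [eq_div_iff (by positivity), hM]; linear_combination 30 * x11
  rw [mul_assoc (8*γ), y01, mul_assoc 4 (s^2), y11, y00, ha]
  field_simp
  ring
end

section
/- With U the Poisson extension of w(x) = (1 + |x|²)^{−(n−2γ)/2} as defined in the context, one has ∫_{ℝ^{n+1}_+} y^{a}·x₁²·U² dx dy = [(3n² − 18n − (a² − 2a − 27)) / (2·(n−3)·(3−a)·(a+1))]·∫_{ℝ^{n+1}_+} y^{a+2}·U² dx dy. -/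
open MeasureTheory Real Set in
theorem aux_lint {α : Type*} [MeasurableSpace α] {m : Measure α} {f : α → ℝ} {c : ℝ}
    (hf : 0 ≤ᵐ[m] f) (h : ∫ x, f x ∂m = c) (hc : 0 < c) :
    ∫⁻ x, ENNReal.ofReal (f x) ∂m = ENNReal.ofReal c := by
  have hi : Integrable f m := Integrable.of_integral_ne_zero (by rw [h]; exact hc.ne')
  rw [← h, ofReal_integral_eq_lintegral_ofReal hi hf]

open MeasureTheory Real Set in
theorem aux_lint_Ioi {f : ℝ → ℝ} {c : ℝ}
    (hf : ∀ x, 0 < x → 0 ≤ f x) (h : ∫ x in Ioi (0:ℝ), f x = c) (hc : 0 < c) :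
    ∫⁻ x in Ioi (0:ℝ), ENNReal.ofReal (f x) = ENNReal.ofReal c := by
  refine aux_lint ?_ h hc
  filter_upwards [ae_restrict_mem measurableSet_Ioi] with x hx
  exact hf x hx

open MeasureTheory Real Set in
theorem aux_gamma {p r : ℝ} (hp : 0 < p) (hr : 0 < r) :
    ∫⁻ t in Ioi (0:ℝ), ENNReal.ofReal (t ^ (p - 1) * exp (-(r * t))) =
      ENNReal.ofReal (Gamma p * r ^ (-p)) := by
  refine aux_lint_Ioi (fun x hx => by positivity) ?_ (by have := Gamma_pos_of_pos hp; positivity)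
  rw [integral_rpow_mul_exp_neg_mul_Ioi hp hr, one_div, inv_rpow hr.le, ← rpow_neg hr.le, mul_comm]

open MeasureTheory Real Set in
theorem aux_invgamma {p r : ℝ} (hp : 0 < p) (hr : 0 < r) :
    ∫⁻ t in Ioi (0:ℝ), ENNReal.ofReal (t ^ (-p - 1) * exp (-(r / t))) =
      ENNReal.ofReal (Gamma p * r ^ (-p)) := by
  refine aux_lint_Ioi (fun x hx => by positivity) ?_ (by have := Gamma_pos_of_pos hp; positivity)
  have h1 := integral_comp_rpow_Ioi (fun t : ℝ => t ^ (p - 1) * exp (-(r * t)))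
    (p := -1) (by norm_num)
  rw [integral_rpow_mul_exp_neg_mul_Ioi hp hr, one_div, inv_rpow hr.le, ← rpow_neg hr.le,
    mul_comm] at h1
  rw [← h1]
  refine setIntegral_congr_fun measurableSet_Ioi (fun t ht => ?_)
  have ht' : 0 < t := ht
  simp only [smul_eq_mul, abs_neg, abs_one, one_mul]
  rw [← rpow_mul ht'.le, ← mul_assoc, ← rpow_add ht', rpow_neg_one, div_eq_mul_inv]
  congr 2
  ring

open MeasureTheory Real Set in
theorem aux_ygamma {q k : ℝ} (hq : -1 < q) (hk : 0 < k) :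
    ∫⁻ y in Ioi (0:ℝ), ENNReal.ofReal (y ^ q * exp (-(k * y ^ 2))) =
      ENNReal.ofReal (Gamma ((q + 1) / 2) / 2 * k ^ (-((q + 1) / 2))) := by
  have hg : 0 < Gamma ((q + 1) / 2) := Gamma_pos_of_pos (by linarith)
  refine aux_lint_Ioi (fun x hx => by positivity) ?_ (by positivity)
  have := integral_rpow_mul_exp_neg_mul_rpow (p := 2) (by norm_num) hq hk
  simp only [rpow_two, neg_mul] at this
  rw [this, neg_div]
  ring

open MeasureTheory Real Set ProbabilityTheory in
theorem aux_beta {p q : ℝ} (hp : 0 < p) (hq : 0 < q) :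
    ∫⁻ u in Ioo (0:ℝ) 1, ENNReal.ofReal (u ^ (p - 1) * (1 - u) ^ (q - 1)) =
      ENNReal.ofReal (Gamma p * Gamma q / Gamma (p + q)) := by
  have h := lintegral_betaPDF_eq_one hp hq
  rw [lintegral_betaPDF] at h
  have hb : 0 < beta p q := beta_pos hp hq
  have : ∀ u : ℝ, ENNReal.ofReal (1 / beta p q * u ^ (p - 1) * (1 - u) ^ (q - 1)) =
      ENNReal.ofReal (1 / beta p q) * ENNReal.ofReal (u ^ (p - 1) * (1 - u) ^ (q - 1)) := by
    intro u
    rw [← ENNReal.ofReal_mul (by positivity), mul_assoc]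
  simp_rw [this] at h
  rw [lintegral_const_mul' _ _ ENNReal.ofReal_ne_top] at h
  change _ = ENNReal.ofReal (beta p q)
  rw [one_div, ENNReal.ofReal_inv_of_pos hb] at h
  exact (ENNReal.eq_inv_of_mul_eq_one_left ((mul_comm _ _).trans h)).trans (inv_inv _)

open MeasureTheory Real Set in
theorem aux_beta_scaled {p q T : ℝ} (hp : 0 < p) (hq : 0 < q) (hT : 0 < T) :
    ∫⁻ u in Ioo (0:ℝ) T, ENNReal.ofReal (u ^ (p - 1) * (T - u) ^ (q - 1)) =
      ENNReal.ofReal (Gamma p * Gamma q / Gamma (p + q)) * ENNReal.ofReal (T ^ (p + q - 1)) := by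
  have himg : (fun u : ℝ => T * u) '' Ioo 0 1 = Ioo 0 T := by
    rw [Set.image_mul_left_Ioo hT]; simp
  have := lintegral_image_eq_lintegral_abs_deriv_mul (s := Ioo (0:ℝ) 1) (f := fun u => T * u)
    (f' := fun _ => T) measurableSet_Ioo
    (fun x _ => by simpa using ((hasDerivAt_id x).const_mul T).hasDerivWithinAt)
    (fun a _ b _ h => by simpa [hT.ne'] using h)
    (fun u => ENNReal.ofReal (u ^ (p - 1) * (T - u) ^ (q - 1)))
  rw [himg] at this
  rw [this, mul_comm, ← aux_beta hp hq, ← lintegral_const_mul' _ _ ENNReal.ofReal_ne_top]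
  refine setLIntegral_congr_fun measurableSet_Ioo (fun u hu => ?_)
  have h1 : 0 < 1 - u := by linarith [hu.2]
  have h0 : 0 < u := hu.1
  rw [← ENNReal.ofReal_mul (by positivity), ← ENNReal.ofReal_mul (by positivity), abs_of_pos hT]
  congr 1
  rw [show T - T * u = T * (1 - u) by ring, mul_rpow hT.le h0.le, mul_rpow hT.le h1.le,
    show p + q - 1 = 1 + (p - 1) + (q - 1) by ring, rpow_add hT, rpow_add hT, rpow_one]
  ring

open MeasureTheory Real Set in
theorem aux_conv {p q : ℝ} (hp : 0 < p) (hq : 0 < q) {g : ℝ → ENNReal} (hg : Measurable g) :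
    ∫⁻ u in Ioi (0:ℝ), ∫⁻ v in Ioi (0:ℝ), ENNReal.ofReal (u ^ (p - 1) * v ^ (q - 1)) * g (u + v) =
      ENNReal.ofReal (Gamma p * Gamma q / Gamma (p + q)) *
        ∫⁻ T in Ioi (0:ℝ), ENNReal.ofReal (T ^ (p + q - 1)) * g T := by
  let F : ℝ → ℝ → ENNReal := fun u T => if 0 < u ∧ u < T then
    ENNReal.ofReal (u ^ (p - 1) * (T - u) ^ (q - 1)) * g T else 0
  have hF : Measurable (Function.uncurry F) := by
    refine Measurable.ite ?_ (by fun_prop) measurable_const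
    exact (measurableSet_lt measurable_const measurable_fst).inter
      (measurableSet_lt measurable_fst measurable_snd)
  have h1 : ∫⁻ u in Ioi (0:ℝ), ∫⁻ v in Ioi (0:ℝ),
      ENNReal.ofReal (u ^ (p - 1) * v ^ (q - 1)) * g (u + v) = ∫⁻ u, ∫⁻ T, F u T := by
    rw [← lintegral_indicator measurableSet_Ioi]
    refine lintegral_congr (fun u => ?_)
    by_cases hu : 0 < u
    · rw [indicator_of_mem (by exact hu), ← lintegral_indicator measurableSet_Ioi,
        ← lintegral_sub_right_eq_self _ u]
      refine lintegral_congr (fun T => ?_)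
      by_cases hT : u < T
      · rw [indicator_of_mem (by simpa using hT)]
        simp [F, hu, hT]
      · rw [indicator_of_notMem (by simpa using hT)]
        simp [F, hT]
    · rw [indicator_of_notMem (by exact hu)]
      simp [F, hu]
  have h2 : ∀ T, ∫⁻ u, F u T = (Ioi (0:ℝ)).indicator (fun T =>
      ENNReal.ofReal (Gamma p * Gamma q / Gamma (p + q)) * (ENNReal.ofReal (T ^ (p + q - 1)) * g T)) T := by
    intro T
    by_cases hT : 0 < T
    · rw [indicator_of_mem (by exact hT), ← mul_assoc, ← aux_beta_scaled hp hq hT,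
        ← lintegral_mul_const _ (by fun_prop), ← lintegral_indicator measurableSet_Ioo]
      refine lintegral_congr (fun u => ?_)
      simp [F, indicator]
    · rw [indicator_of_notMem (by exact hT)]
      have : ∀ u, F u T = 0 := fun u => if_neg (fun h => hT (h.1.trans h.2))
      simp [this]
  rw [h1, lintegral_lintegral_swap hF.aemeasurable]
  simp_rw [h2]
  rw [lintegral_indicator measurableSet_Ioi, lintegral_const_mul' _ _ ENNReal.ofReal_ne_top]

open MeasureTheory Real Set in
theorem aux_T {p q S : ℝ} (hp : 0 < p) (hq : p < q) (hS : 0 < S) :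
    ∫⁻ T in Ioi (0:ℝ), ENNReal.ofReal (T ^ (p - 1) * (S + T) ^ (-q)) =
      ENNReal.ofReal (Gamma p * Gamma (q - p) / Gamma q * S ^ (p - q)) := by
  have hq0 : 0 < q := hp.trans hq
  have gq := Gamma_pos_of_pos hq0
  have gp := Gamma_pos_of_pos hp
  have gqp := Gamma_pos_of_pos (sub_pos.2 hq)
  have key : ∫⁻ T in Ioi (0:ℝ), ∫⁻ r in Ioi (0:ℝ), ENNReal.ofReal (T ^ (p - 1) * (r ^ (q - 1) * exp (-((S + T) * r)))) = ENNReal.ofReal (Gamma p * Gamma (q - p) * S ^ (p - q)) := by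
    rw [lintegral_lintegral_swap (by fun_prop)]
    have : ∀ r ∈ Ioi (0:ℝ), ∫⁻ T in Ioi (0:ℝ), ENNReal.ofReal (T ^ (p - 1) * (r ^ (q - 1) * exp (-((S + T) * r)))) = ENNReal.ofReal (Gamma p) * ENNReal.ofReal (r ^ ((q - p) - 1) * exp (-(S * r))) := by
      intro r hr
      have hr : 0 < r := hr
      have e : ∀ T : ℝ, ENNReal.ofReal (T ^ (p - 1) * (r ^ (q - 1) * exp (-((S + T) * r)))) =
          ENNReal.ofReal (r ^ (q - 1) * exp (-(S * r))) * ENNReal.ofReal (T ^ (p - 1) * exp (-(r * T))) := by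
        intro T
        rw [← ENNReal.ofReal_mul (by positivity), show -((S + T) * r) = -(S*r) + -(r * T) by ring, exp_add]
        congr 1; ring
      simp_rw [e]
      rw [lintegral_const_mul' _ _ ENNReal.ofReal_ne_top, aux_gamma hp hr,
        ← ENNReal.ofReal_mul (by positivity), ← ENNReal.ofReal_mul (by positivity)]
      congr 1
      rw [show q - p - 1 = (q - 1) + -p by ring, rpow_add hr]
      ring
    rw [setLIntegral_congr_fun measurableSet_Ioi this, lintegral_const_mul' _ _ ENNReal.ofReal_ne_top,
      aux_gamma (sub_pos.2 hq) hS, ← ENNReal.ofReal_mul (by positivity), neg_sub, mul_assoc]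
  have key2 : ∀ T ∈ Ioi (0:ℝ), ∫⁻ r in Ioi (0:ℝ), ENNReal.ofReal (T ^ (p - 1) * (r ^ (q - 1) * exp (-((S + T) * r)))) = ENNReal.ofReal (Gamma q) * ENNReal.ofReal (T ^ (p - 1) * (S + T) ^ (-q)) := by
    intro T hT
    have hT : 0 < T := hT
    simp_rw [ENNReal.ofReal_mul (p := T ^ (p - 1)) (by positivity)]
    rw [lintegral_const_mul' _ _ ENNReal.ofReal_ne_top, aux_gamma hq0 (by positivity),
      ENNReal.ofReal_mul gq.le]
    ring
  rw [setLIntegral_congr_fun measurableSet_Ioi key2, lintegral_const_mul' _ _ ENNReal.ofReal_ne_top] at key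
  have hne : ENNReal.ofReal (Gamma q) ≠ 0 := by simpa using gq
  rw [← ENNReal.mul_right_inj hne ENNReal.ofReal_ne_top, key, ← ENNReal.ofReal_mul gq.le]
  congr 1
  field_simp

open MeasureTheory Real Set in
theorem aux_gauss0 {n : ℕ} {b : ℝ} (hb : 0 < b) :
    ∫⁻ x : EuclideanSpace ℝ (Fin n), ENNReal.ofReal (exp (-(b * ‖x‖ ^ 2))) =
      ENNReal.ofReal ((π / b) ^ ((n:ℝ) / 2)) := by
  refine aux_lint (Filter.Eventually.of_forall fun x => by positivity) ?_ (by positivity)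
  have := GaussianFourier.integral_rexp_neg_mul_sq_norm (V := EuclideanSpace ℝ (Fin n)) hb
  simpa using this

open MeasureTheory Real Set in
theorem aux_gauss1d {b : ℝ} (hb : 0 < b) :
    ∫ x : ℝ, x ^ 2 * exp (-(b * x ^ 2)) = 1 / (2 * b) * √(π / b) := by
  have h := integral_comp_abs (f := fun x : ℝ => x ^ 2 * exp (-(b * x ^ 2)))
  simp only [sq_abs] at h
  rw [h]
  have := integral_rpow_mul_exp_neg_mul_rpow (p := 2) (q := 2) (by norm_num) (by norm_num) hb
  simp only [rpow_two, neg_mul] at this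
  rw [this, show ((2:ℝ) + 1) / 2 = 1 / 2 + 1 by norm_num, Gamma_add_one (by norm_num),
    Gamma_one_half_eq, show (-((2:ℝ) + 1)) / 2 = -1 + -(1 / 2) by norm_num, rpow_add hb, rpow_neg_one,
    rpow_neg hb.le, ← sqrt_eq_rpow, sqrt_div pi_pos.le]
  field_simp

open MeasureTheory Real Set in
theorem aux_gauss2 {n : ℕ} (i : Fin n) {b : ℝ} (hb : 0 < b) :
    ∫⁻ x : EuclideanSpace ℝ (Fin n), ENNReal.ofReal ((x i) ^ 2 * exp (-(b * ‖x‖ ^ 2))) =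
      ENNReal.ofReal (1 / (2 * b) * (π / b) ^ ((n:ℝ) / 2)) := by
  refine aux_lint (Filter.Eventually.of_forall fun x => by positivity) ?_ (by positivity)
  have h1 := (EuclideanSpace.volume_preserving_symm_measurableEquiv_toLp (Fin n)).symm.integral_comp'
    (g := fun x : EuclideanSpace ℝ (Fin n) => (x i) ^ 2 * exp (-(b * ‖x‖ ^ 2)))
  rw [← h1]
  have h2 := integral_fintype_prod_volume_eq_prod (ι := Fin n) (𝕜 := ℝ) (E := fun _ => ℝ)
    (fun j x => (if j = i then x ^ 2 else 1) * exp (-(b * x ^ 2)))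
  have h3 : ∀ j : Fin n, ∫ x : ℝ, (if j = i then x ^ 2 else 1) * exp (-(b * x ^ 2)) =
      (if j = i then 1 / (2 * b) else 1) * √(π / b) := by
    intro j
    by_cases hj : j = i
    · simp only [hj, if_true]; exact aux_gauss1d hb
    · simp only [hj, if_false, one_mul]
      simpa using integral_gaussian b
  simp only [h3, Finset.prod_mul_distrib] at h2
  simp only [Finset.prod_ite_eq', Finset.mem_univ, if_true, Finset.prod_const, Finset.card_univ,
    Fintype.card_fin] at h2
  have h4 : √(π / b) ^ n = (π / b) ^ ((n:ℝ) / 2) := by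
    rw [sqrt_eq_rpow, ← rpow_natCast, ← rpow_mul (by positivity)]
    congr 1; ring
  rw [← h4, ← h2]
  refine integral_congr_ae (Filter.Eventually.of_forall fun x => ?_)
  simp only [← exp_sum]
  simp [EuclideanSpace.norm_sq_eq, Finset.mul_sum]

open MeasureTheory Real Set in
theorem aux_gaussconv {n : ℕ} (x : EuclideanSpace ℝ (Fin n)) {s τ : ℝ} (hs : 0 < s) (hτ : 0 < τ) :
    ∫⁻ ξ : EuclideanSpace ℝ (Fin n),
      ENNReal.ofReal (exp (-(‖x - ξ‖ ^ 2 / τ)) * exp (-(s * ‖ξ‖ ^ 2))) =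
      ENNReal.ofReal ((π / (s + 1 / τ)) ^ ((n:ℝ) / 2) * exp (-(1 / (1 / s + τ) * ‖x‖ ^ 2))) := by
  have hb : 0 < s + 1 / τ := by positivity
  have e : ∀ ξ : EuclideanSpace ℝ (Fin n), ENNReal.ofReal (exp (-(‖x - ξ‖ ^ 2 / τ)) * exp (-(s * ‖ξ‖ ^ 2)))
      = ENNReal.ofReal (exp (-(1 / (1 / s + τ) * ‖x‖ ^ 2))) *
        ENNReal.ofReal (exp (-((s + 1 / τ) * ‖ξ - (1 / (1 + s * τ)) • x‖ ^ 2))) := by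
    intro ξ
    rw [← ENNReal.ofReal_mul (by positivity), ← exp_add, ← exp_add]
    congr 2
    rw [norm_sub_sq_real, norm_sub_sq_real, norm_smul, inner_smul_right, real_inner_comm,
      norm_of_nonneg (by positivity)]
    have : 0 < 1 + s * τ := by positivity
    have : 0 < 1 + τ * s := by positivity
    field_simp
    ring
  simp_rw [e]
  rw [lintegral_const_mul' _ _ ENNReal.ofReal_ne_top,
    lintegral_sub_right_eq_self (fun ξ : EuclideanSpace ℝ (Fin n) =>
      ENNReal.ofReal (exp (-((s + 1 / τ) * ‖ξ‖ ^ 2)))), aux_gauss0 hb,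
      ← ENNReal.ofReal_mul (by positivity), mul_comm]

open Real in
noncomputable def kker (n : ℕ) (γ : ℝ) (p : ℝ × ℝ) (x : EuclideanSpace ℝ (Fin n)) (y : ℝ) : ℝ :=
  y ^ (2 * γ) * (p.1 ^ (-γ - 1) * exp (-p.1) * (p.2 ^ (-γ - 1) * exp (-(y ^ 2 / p.2))) *
    ((1 / p.1 + p.2) ^ (-((n:ℝ) / 2)) * exp (-(1 / (1 / p.1 + p.2) * ‖x‖ ^ 2))))

open MeasureTheory Real Set in
noncomputable abbrev muq : Measure (ℝ × ℝ) :=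
  ((volume : Measure ℝ).restrict (Ioi 0)).prod ((volume : Measure ℝ).restrict (Ioi 0))

open MeasureTheory Real Set in
theorem aux_ae_quad : ∀ᵐ p ∂muq, 0 < p.1 ∧ 0 < p.2 := by
  rw [muq, Measure.prod_restrict]
  filter_upwards [ae_restrict_mem (measurableSet_Ioi.prod measurableSet_Ioi)] with p hp
  exact hp

open MeasureTheory Real Set in
theorem aux_Urep {n : ℕ} {γ : ℝ} (hγ : 0 < γ) (hn : 4 + 2 * γ < (n:ℝ))
    (x : EuclideanSpace ℝ (Fin n)) {y : ℝ} (hy : 0 < y) :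
    ∫⁻ ξ : EuclideanSpace ℝ (Fin n), ENNReal.ofReal
      (y ^ (2*γ) * (‖x - ξ‖^2 + y^2) ^ (-(((n:ℝ) + 2*γ)/2)) *
        (1 + ‖ξ‖^2) ^ (-(((n:ℝ) - 2*γ)/2))) =
      ENNReal.ofReal (π ^ ((n:ℝ) / 2) /
        (Gamma (((n:ℝ) - 2*γ)/2) * Gamma (((n:ℝ) + 2*γ)/2))) *
        ∫⁻ p, ENNReal.ofReal (kker n γ p x y) ∂muq := by
  set P := ((n:ℝ) - 2*γ)/2 with hP
  set Q := ((n:ℝ) + 2*γ)/2 with hQ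
  have hP0 : 0 < P := by rw [hP]; linarith
  have hQ0 : 0 < Q := by rw [hQ]; linarith
  have gP := Gamma_pos_of_pos hP0
  have gQ := Gamma_pos_of_pos hQ0
  let c : ℝ := y ^ (2 * γ) / (Gamma P * Gamma Q)
  have hc : 0 < c := by positivity
  let f : EuclideanSpace ℝ (Fin n) → ℝ × ℝ → ENNReal := fun ξ p =>
    ENNReal.ofReal (p.1 ^ (P - 1) * exp (-((1 + ‖ξ‖ ^ 2) * p.1))) *
      ENNReal.ofReal (p.2 ^ (-Q - 1) * exp (-((‖x - ξ‖ ^ 2 + y ^ 2) / p.2)))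
  have e1 : ∀ ξ : EuclideanSpace ℝ (Fin n), ENNReal.ofReal
      (y ^ (2*γ) * (‖x - ξ‖^2 + y^2) ^ (-Q) * (1 + ‖ξ‖^2) ^ (-P)) =
      ENNReal.ofReal c * ∫⁻ p, f ξ p ∂muq := by
    intro ξ
    have := lintegral_prod_mul (μ := (volume : Measure ℝ).restrict (Ioi 0))
      (ν := (volume : Measure ℝ).restrict (Ioi 0))
      (f := fun s : ℝ => ENNReal.ofReal (s ^ (P - 1) * exp (-((1 + ‖ξ‖ ^ 2) * s))))
      (g := fun t : ℝ => ENNReal.ofReal (t ^ (-Q - 1) * exp (-((‖x - ξ‖ ^ 2 + y ^ 2) / t))))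
      (by fun_prop) (by fun_prop)
    simp only [f]
    rw [this, aux_gamma hP0 (by positivity), aux_invgamma hQ0 (by positivity),
      ← ENNReal.ofReal_mul (by positivity), ← ENNReal.ofReal_mul (by positivity)]
    congr 1
    simp only [c]
    field_simp
  have hf : Measurable (Function.uncurry f) := by
    simp only [f, Function.uncurry_def]
    fun_prop
  simp_rw [e1]
  rw [lintegral_const_mul' _ _ ENNReal.ofReal_ne_top, lintegral_lintegral_swap hf.aemeasurable,
    ← lintegral_const_mul' _ _ ENNReal.ofReal_ne_top, ← lintegral_const_mul' _ _ ENNReal.ofReal_ne_top]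
  refine lintegral_congr_ae ?_
  filter_upwards [aux_ae_quad] with p hp
  obtain ⟨hs, ht⟩ := hp
  have e2 : ∀ ξ, f ξ p = ENNReal.ofReal (p.1 ^ (P - 1) * exp (-p.1) *
      (p.2 ^ (-Q - 1) * exp (-(y ^ 2 / p.2)))) *
      ENNReal.ofReal (exp (-(‖x - ξ‖ ^ 2 / p.2)) * exp (-(p.1 * ‖ξ‖ ^ 2))) := by
    intro ξ
    simp only [f]
    rw [← ENNReal.ofReal_mul (by positivity), ← ENNReal.ofReal_mul (by positivity),
      show -((1 + ‖ξ‖ ^ 2) * p.1) = -p.1 + -(p.1 * ‖ξ‖ ^ 2) by ring,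
      show -((‖x - ξ‖ ^ 2 + y ^ 2) / p.2) = -(‖x - ξ‖ ^ 2 / p.2) + -(y ^ 2 / p.2) by ring,
      exp_add, exp_add]
    congr 1; ring
  simp_rw [e2]
  rw [lintegral_const_mul' _ _ ENNReal.ofReal_ne_top, aux_gaussconv x hs ht,
    ← ENNReal.ofReal_mul (by positivity), ← ENNReal.ofReal_mul (by positivity),
    ← ENNReal.ofReal_mul (by positivity)]
  congr 1
  have e3 : (π / (p.1 + 1 / p.2)) ^ ((n:ℝ) / 2) = π ^ ((n:ℝ) / 2) *
      (p.2 ^ ((n:ℝ) / 2) * (p.1 ^ (-((n:ℝ) / 2)) * (1 / p.1 + p.2) ^ (-((n:ℝ) / 2)))) := by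
    rw [← mul_rpow (by positivity) (by positivity), rpow_neg (by positivity),
      ← inv_rpow (by positivity), ← mul_rpow (by positivity) (by positivity),
      ← mul_rpow (by positivity) (by positivity)]
    congr 1
    have : 0 < 1 + p.1 * p.2 := by positivity
    field_simp
    ring
  rw [e3]
  have e4 : p.1 ^ (P - 1) * p.1 ^ (-((n:ℝ) / 2)) = p.1 ^ (-γ - 1) := by
    rw [← rpow_add hs]; congr 1; rw [hP]; ring
  have e5 : p.2 ^ (-Q - 1) * p.2 ^ ((n:ℝ) / 2) = p.2 ^ (-γ - 1) := by
    rw [← rpow_add ht]; congr 1; rw [hQ]; ring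
  simp only [c, kker]
  rw [← e4, ← e5]
  ring

theorem kker_nonneg {n : ℕ} {γ : ℝ} {p : ℝ × ℝ} (h1 : 0 < p.1) (h2 : 0 < p.2)
    (x : EuclideanSpace ℝ (Fin n)) {y : ℝ} (hy : 0 < y) : 0 ≤ kker n γ p x y := by
  unfold kker; positivity

open MeasureTheory Real Set in
theorem aux_sep {n : ℕ} (f : ℝ → ℝ) (g : EuclideanSpace ℝ (Fin n) → ℝ) (c d e : ℝ)
    (hf : Measurable f) (hg : Measurable g) (hc : 0 ≤ c) (hd : 0 ≤ d)
    (hf0 : ∀ y, 0 < y → 0 ≤ f y)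
    (h1 : ∫⁻ y in Ioi (0:ℝ), ENNReal.ofReal (f y) = ENNReal.ofReal d)
    (h2 : ∫⁻ x, ENNReal.ofReal (g x) = ENNReal.ofReal e)
    (F : ℝ × EuclideanSpace ℝ (Fin n) → ENNReal)
    (hF : ∀ y x, 0 < y → F (y, x) = ENNReal.ofReal (c * (f y * g x))) :
    ∫⁻ z, F z ∂(((volume : Measure ℝ).restrict (Ioi 0)).prod volume) =
      ENNReal.ofReal (c * (d * e)) := by
  rw [ENNReal.ofReal_mul hc, ENNReal.ofReal_mul hd, ← h1, ← h2,
    ← lintegral_prod_mul (by fun_prop) (by fun_prop), ← lintegral_const_mul' _ _ ENNReal.ofReal_ne_top]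
  refine lintegral_congr_ae ?_
  have : ∀ᵐ z ∂(((volume : Measure ℝ).restrict (Ioi 0)).prod
      (volume : Measure (EuclideanSpace ℝ (Fin n)))), 0 < z.1 :=
    Measure.quasiMeasurePreserving_fst.ae (ae_restrict_mem measurableSet_Ioi)
  filter_upwards [this] with z hz
  rw [← ENNReal.ofReal_mul (hf0 _ hz), ← ENNReal.ofReal_mul hc, ← hF _ _ hz]

open MeasureTheory Real Set in
theorem aux_xyL {n : ℕ} (i : Fin n) {γ a : ℝ} (hγ : 0 < γ) (ha : a = 1 - 2 * γ)
    {s t s' t' : ℝ} (hs : 0 < s) (ht : 0 < t) (hs' : 0 < s') (ht' : 0 < t') :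
    ∫⁻ z : ℝ × EuclideanSpace ℝ (Fin n), ENNReal.ofReal (z.1 ^ a * (z.2 i) ^ 2) *
      (ENNReal.ofReal (kker n γ (s, t) z.2 z.1) * ENNReal.ofReal (kker n γ (s', t') z.2 z.1))
      ∂(((volume : Measure ℝ).restrict (Ioi 0)).prod volume) =
    ENNReal.ofReal (π ^ ((n:ℝ) / 2) * Gamma (1 + γ) / 4) *
      ENNReal.ofReal ((s * s') ^ (-γ - 1) * exp (-(s + s')) *
        ((t + t') ^ (-1 - γ) * ((1 / s + t) * (1 / s' + t')) *
        (1 / s + 1 / s' + (t + t')) ^ (-((n:ℝ) / 2 + 1)))) := by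
  have hg := Gamma_pos_of_pos (show 0 < 1 + γ by linarith)
  have hA : 0 < 1 / s + t := by positivity
  have hB : 0 < 1 / s' + t' := by positivity
  set A := 1 / s + t with hAd
  set B := 1 / s' + t' with hBd
  have hk : 0 < 1 / t + 1 / t' := by positivity
  have hK : 0 < 1 / A + 1 / B := by positivity
  rw [aux_sep (fun y => y ^ (1 + 2 * γ) * exp (-((1 / t + 1 / t') * y ^ 2)))
    (fun x : EuclideanSpace ℝ (Fin n) => (x i) ^ 2 * exp (-((1 / A + 1 / B) * ‖x‖ ^ 2)))
    (s ^ (-γ - 1) * exp (-s) * t ^ (-γ - 1) * A ^ (-((n:ℝ) / 2)) *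
      (s' ^ (-γ - 1) * exp (-s') * t' ^ (-γ - 1) * B ^ (-((n:ℝ) / 2)))) _ _
      (by fun_prop) (by fun_prop) (by positivity) ?_ (fun y hy => by positivity)
      (aux_ygamma (by linarith) hk) (aux_gauss2 i hK), ← ENNReal.ofReal_mul (by positivity)]
  · congr 1
    rw [show (1 + 2 * γ + 1) / 2 = 1 + γ by ring, show 1 / s + 1 / s' + (t + t') = A + B by rw [hAd, hBd]; ring]
    have e1 : (1 / t + 1 / t') ^ (-(1 + γ)) = t ^ (1 + γ) * t' ^ (1 + γ) * (t + t') ^ (-1 - γ) := by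
      rw [show -1 - γ = -(1 + γ) by ring, rpow_neg (by positivity) , rpow_neg (by positivity),
        ← mul_rpow ht.le ht'.le, ← inv_rpow (by positivity), ← inv_rpow (by positivity),
        ← mul_rpow (by positivity) (by positivity)]
      congr 1; field_simp; ring
    have e2 : (π / (1 / A + 1 / B)) ^ ((n:ℝ) / 2) = π ^ ((n:ℝ) / 2) *
        (A ^ ((n:ℝ) / 2) * B ^ ((n:ℝ) / 2) * (A + B) ^ (-((n:ℝ) / 2))) := by
      rw [rpow_neg (by positivity), ← inv_rpow (by positivity), ← mul_rpow hA.le hB.le,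
        ← mul_rpow (by positivity) (by positivity), ← mul_rpow (by positivity) (by positivity)]
      congr 1; field_simp; ring
    have e3 : 1 / (2 * (1 / A + 1 / B)) = A * B * (A + B) ^ (-1 : ℝ) / 2 := by
      rw [rpow_neg_one]; field_simp; ring
    have e4 : (A + B) ^ (-((n:ℝ) / 2 + 1)) = (A + B) ^ (-((n:ℝ) / 2)) * (A + B) ^ (-1 : ℝ) := by
      rw [← rpow_add (by positivity)]; congr 1; ring
    have e5 : ∀ z : ℝ, 0 < z → z ^ (-γ - 1) = (z ^ (1 + γ))⁻¹ := fun z hz => by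
      rw [← rpow_neg hz.le]; congr 1; ring
    rw [e1, e2, e3, e4, neg_add, exp_add, mul_rpow hs.le hs'.le, e5 t ht, e5 t' ht',
      rpow_neg hA.le, rpow_neg hB.le]
    field_simp
    ring
  · intro y x hy
    simp only [kker, ← hAd, ← hBd]
    rw [← ENNReal.ofReal_mul (by positivity), ← ENNReal.ofReal_mul (by positivity)]
    congr 1
    rw [show 1 + 2 * γ = a + 2 * γ + 2 * γ by rw [ha]; ring, rpow_add hy, rpow_add hy,
      show -((1 / t + 1 / t') * y ^ 2) = -(y ^ 2 / t) + -(y ^ 2 / t') by ring,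
      show -((1 / A + 1 / B) * ‖x‖ ^ 2) = -(1 / A * ‖x‖ ^ 2) + -(1 / B * ‖x‖ ^ 2) by ring,
      exp_add, exp_add]
    ring
  · rw [show (1 + 2 * γ + 1) / 2 = 1 + γ by ring]; positivity

open MeasureTheory Real Set in
theorem aux_xyR {n : ℕ} {γ a : ℝ} (hγ : 0 < γ) (ha : a = 1 - 2 * γ)
    {s t s' t' : ℝ} (hs : 0 < s) (ht : 0 < t) (hs' : 0 < s') (ht' : 0 < t') :
    ∫⁻ z : ℝ × EuclideanSpace ℝ (Fin n), ENNReal.ofReal (z.1 ^ (a + 2)) *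
      (ENNReal.ofReal (kker n γ (s, t) z.2 z.1) * ENNReal.ofReal (kker n γ (s', t') z.2 z.1))
      ∂(((volume : Measure ℝ).restrict (Ioi 0)).prod volume) =
    ENNReal.ofReal (π ^ ((n:ℝ) / 2) * Gamma (2 + γ) / 2) *
      ENNReal.ofReal ((s * s') ^ (-γ - 1) * exp (-(s + s')) *
        ((t + t') ^ (-2 - γ) * (t * t') *
        (1 / s + 1 / s' + (t + t')) ^ (-((n:ℝ) / 2)))) := by
  have hg := Gamma_pos_of_pos (show 0 < 2 + γ by linarith)
  have hA : 0 < 1 / s + t := by positivity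
  have hB : 0 < 1 / s' + t' := by positivity
  set A := 1 / s + t with hAd
  set B := 1 / s' + t' with hBd
  have hk : 0 < 1 / t + 1 / t' := by positivity
  have hK : 0 < 1 / A + 1 / B := by positivity
  rw [aux_sep (fun y => y ^ (3 + 2 * γ) * exp (-((1 / t + 1 / t') * y ^ 2)))
    (fun x : EuclideanSpace ℝ (Fin n) => exp (-((1 / A + 1 / B) * ‖x‖ ^ 2)))
    (s ^ (-γ - 1) * exp (-s) * t ^ (-γ - 1) * A ^ (-((n:ℝ) / 2)) *
      (s' ^ (-γ - 1) * exp (-s') * t' ^ (-γ - 1) * B ^ (-((n:ℝ) / 2)))) _ _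
      (by fun_prop) (by fun_prop) (by positivity) ?_ (fun y hy => by positivity)
      (aux_ygamma (by linarith) hk) (aux_gauss0 hK), ← ENNReal.ofReal_mul (by positivity)]
  · congr 1
    rw [show (3 + 2 * γ + 1) / 2 = 2 + γ by ring, show 1 / s + 1 / s' + (t + t') = A + B by rw [hAd, hBd]; ring]
    have e1 : (1 / t + 1 / t') ^ (-(2 + γ)) = t ^ (2 + γ) * t' ^ (2 + γ) * (t + t') ^ (-2 - γ) := by
      rw [show -2 - γ = -(2 + γ) by ring, rpow_neg (by positivity) , rpow_neg (by positivity),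
        ← mul_rpow ht.le ht'.le, ← inv_rpow (by positivity), ← inv_rpow (by positivity),
        ← mul_rpow (by positivity) (by positivity)]
      congr 1; field_simp; ring
    have e2 : (π / (1 / A + 1 / B)) ^ ((n:ℝ) / 2) = π ^ ((n:ℝ) / 2) *
        (A ^ ((n:ℝ) / 2) * B ^ ((n:ℝ) / 2) * (A + B) ^ (-((n:ℝ) / 2))) := by
      rw [rpow_neg (by positivity), ← inv_rpow (by positivity), ← mul_rpow hA.le hB.le,
        ← mul_rpow (by positivity) (by positivity), ← mul_rpow (by positivity) (by positivity)]
      congr 1; field_simp; ring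
    have e5 : ∀ z : ℝ, 0 < z → z ^ (-γ - 1) = (z ^ (2 + γ))⁻¹ * z := fun z hz => by
      rw [← rpow_neg hz.le]
      nth_rewrite 3 [← rpow_one z]
      rw [← rpow_add hz]; congr 1; ring
    rw [e1, e2, neg_add, exp_add, mul_rpow hs.le hs'.le, e5 t ht, e5 t' ht',
      rpow_neg hA.le, rpow_neg hB.le]
    field_simp
  · intro y x hy
    simp only [kker, ← hAd, ← hBd]
    rw [← ENNReal.ofReal_mul (by positivity), ← ENNReal.ofReal_mul (by positivity)]
    congr 1
    rw [show 3 + 2 * γ = a + 2 + 2 * γ + 2 * γ by rw [ha]; ring, rpow_add hy (a + 2 + 2 * γ), rpow_add hy (a + 2),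
      show -((1 / t + 1 / t') * y ^ 2) = -(y ^ 2 / t) + -(y ^ 2 / t') by ring,
      show -((1 / A + 1 / B) * ‖x‖ ^ 2) = -(1 / A * ‖x‖ ^ 2) + -(1 / B * ‖x‖ ^ 2) by ring,
      exp_add, exp_add]
    ring
  · rw [show (3 + 2 * γ + 1) / 2 = 2 + γ by ring]; positivity


open MeasureTheory Real Set in
theorem aux_reorder (G : ℝ → ℝ → ℝ → ℝ → ENNReal)
    (hG : Measurable (fun z : (ℝ × ℝ) × (ℝ × ℝ) => G z.1.1 z.1.2 z.2.1 z.2.2)) :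
    ∫⁻ p, ∫⁻ q, G p.1 p.2 q.1 q.2 ∂muq ∂muq =
      ∫⁻ s in Ioi (0:ℝ), ∫⁻ s' in Ioi (0:ℝ), ∫⁻ t in Ioi (0:ℝ), ∫⁻ t' in Ioi (0:ℝ), G s t s' t' := by
  have h1 : Measurable (fun p : ℝ × ℝ => ∫⁻ q, G p.1 p.2 q.1 q.2 ∂muq) :=
    Measurable.lintegral_prod_right' (f := fun z : (ℝ × ℝ) × (ℝ × ℝ) => G z.1.1 z.1.2 z.2.1 z.2.2) hG
  rw [lintegral_prod _ h1.aemeasurable]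
  refine lintegral_congr (fun s => ?_)
  have h2 : ∀ t, ∫⁻ q, G s t q.1 q.2 ∂muq = ∫⁻ s' in Ioi (0:ℝ), ∫⁻ t' in Ioi (0:ℝ), G s t s' t' := by
    intro t
    rw [lintegral_prod]
    exact (hG.comp (f := fun q : ℝ × ℝ => ((s, t), q)) (by fun_prop)).aemeasurable
  simp_rw [h2]
  rw [lintegral_lintegral_swap]
  have h3 : Measurable (fun z : (ℝ × ℝ) × ℝ => G s z.1.1 z.1.2 z.2) :=
    hG.comp (f := fun z : (ℝ × ℝ) × ℝ => ((s, z.1.1), (z.1.2, z.2))) (by fun_prop)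
  exact (Measurable.lintegral_prod_right' h3).aemeasurable

open MeasureTheory Real Set in
theorem aux_tt {p q e m S : ℝ} (hp : 0 < p) (hq : 0 < q) (hr : 0 < p + q + e)
    (hm : p + q + e < m) (hS : 0 < S) :
    ∫⁻ t in Ioi (0:ℝ), ∫⁻ t' in Ioi (0:ℝ), ENNReal.ofReal
      (t ^ (p - 1) * t' ^ (q - 1) * ((t + t') ^ e * (S + (t + t')) ^ (-m))) =
    ENNReal.ofReal (Gamma p * Gamma q / Gamma (p + q) *
      (Gamma (p + q + e) * Gamma (m - (p + q + e)) / Gamma m * S ^ (p + q + e - m))) := by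
  have g1 := Gamma_pos_of_pos hp
  have g2 := Gamma_pos_of_pos hq
  have g3 := Gamma_pos_of_pos (add_pos hp hq)
  have h := aux_conv hp hq (g := fun T => ENNReal.ofReal (T ^ e * (S + T) ^ (-m))) (by fun_prop)
  rw [ENNReal.ofReal_mul (by positivity), ← aux_T hr hm hS]
  refine Eq.trans ?_ (h.trans ?_)
  · refine setLIntegral_congr_fun measurableSet_Ioi (fun t ht => ?_)
    refine setLIntegral_congr_fun measurableSet_Ioi (fun t' ht' => ?_)
    have ht : 0 < t := ht
    have ht' : 0 < t' := ht'
    exact ENNReal.ofReal_mul (by positivity)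
  · congr 1
    refine setLIntegral_congr_fun measurableSet_Ioi (fun t ht => ?_)
    have ht : 0 < t := ht
    change _ * ENNReal.ofReal _ = _
    rw [← ENNReal.ofReal_mul (by positivity), ← mul_assoc, ← rpow_add ht]
    congr 3; ring

open MeasureTheory Real Set in
theorem aux_tL {γ M u v : ℝ} (h0 : 0 < γ) (h1 : γ < 1) (hM : 2 + γ < M) (hu : 0 < u) (hv : 0 < v) :
    ∫⁻ t in Ioi (0:ℝ), ∫⁻ t' in Ioi (0:ℝ), ENNReal.ofReal
      ((t + t') ^ (-1 - γ) * ((u + t) * (v + t')) * (u + v + (t + t')) ^ (-(M + 1))) =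
    ENNReal.ofReal (Gamma (1 - γ) * Gamma (M + γ) / Gamma (M + 1) * (u * v * (u + v) ^ (-γ - M)) +
      (Gamma (2 - γ) * Gamma (M - 1 + γ) / Gamma (M + 1) / 2 +
        Gamma (3 - γ) * Gamma (M - 2 + γ) / Gamma (M + 1) / 6) * (u + v) ^ (2 - γ - M)) := by
  have hS : 0 < u + v := by positivity
  have G2 : Gamma 2 = 1 := Gamma_two
  have G3 : Gamma 3 = 2 := by
    rw [show (3:ℝ) = 2 + 1 by norm_num, Gamma_add_one (by norm_num), G2]; norm_num
  have G4 : Gamma 4 = 6 := by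
    rw [show (4:ℝ) = 3 + 1 by norm_num, Gamma_add_one (by norm_num), G3]; norm_num
  have I11 := aux_tt (p := 1) (q := 1) (e := -1 - γ) (m := M + 1) (S := u + v)
    (by norm_num) (by norm_num) (by linarith) (by linarith) hS
  have I12 := aux_tt (p := 1) (q := 2) (e := -1 - γ) (m := M + 1) (S := u + v)
    (by norm_num) (by norm_num) (by linarith) (by linarith) hS
  have I21 := aux_tt (p := 2) (q := 1) (e := -1 - γ) (m := M + 1) (S := u + v)
    (by norm_num) (by norm_num) (by linarith) (by linarith) hS
  have I22 := aux_tt (p := 2) (q := 2) (e := -1 - γ) (m := M + 1) (S := u + v)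
    (by norm_num) (by norm_num) (by linarith) (by linarith) hS
  rw [show (1:ℝ) + 1 + (-1 - γ) = 1 - γ by ring, show M + 1 - (1 - γ) = M + γ by ring,
    show 1 - γ - (M + 1) = -γ - M by ring, show (1:ℝ) + 1 = 2 by norm_num, G2, Gamma_one] at I11
  rw [show (1:ℝ) + 2 + (-1 - γ) = 2 - γ by ring, show M + 1 - (2 - γ) = M - 1 + γ by ring,
    show 2 - γ - (M + 1) = 1 - γ - M by ring, show (1:ℝ) + 2 = 3 by norm_num, G3, G2, Gamma_one] at I12
  rw [show (2:ℝ) + 1 + (-1 - γ) = 2 - γ by ring, show M + 1 - (2 - γ) = M - 1 + γ by ring,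
    show 2 - γ - (M + 1) = 1 - γ - M by ring, show (2:ℝ) + 1 = 3 by norm_num, G3, G2, Gamma_one] at I21
  rw [show (2:ℝ) + 2 + (-1 - γ) = 3 - γ by ring, show M + 1 - (3 - γ) = M - 2 + γ by ring,
    show 3 - γ - (M + 1) = 2 - γ - M by ring, show (2:ℝ) + 2 = 4 by norm_num, G4, G2] at I22
  have a1 := Gamma_pos_of_pos (show 0 < 1 - γ by linarith)
  have a2 := Gamma_pos_of_pos (show 0 < 2 - γ by linarith)
  have a3 := Gamma_pos_of_pos (show 0 < 3 - γ by linarith)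
  have b0 := Gamma_pos_of_pos (show 0 < M + γ by linarith)
  have b1 := Gamma_pos_of_pos (show 0 < M - 1 + γ by linarith)
  have b2 := Gamma_pos_of_pos (show 0 < M - 2 + γ by linarith)
  have d1 := Gamma_pos_of_pos (show 0 < M + 1 by linarith)
  let F : ℝ → ℝ → ℝ → ℝ → ENNReal := fun p q t t' => ENNReal.ofReal
      (t ^ (p - 1) * t' ^ (q - 1) * ((t + t') ^ (-1 - γ) * (u + v + (t + t')) ^ (-(M + 1))))
  have hFm : ∀ p q, Measurable (Function.uncurry (F p q)) := by
    intro p q; simp only [F, Function.uncurry_def]; fun_prop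
  have hFm1 : ∀ p q t, Measurable (F p q t) := fun p q t => (hFm p q).of_uncurry_left
  have hFm2 : ∀ p q, Measurable (fun t => ∫⁻ t' in Ioi (0:ℝ), F p q t t') := fun p q =>
    (hFm p q).lintegral_prod_right
  have key : ∫⁻ t in Ioi (0:ℝ), ∫⁻ t' in Ioi (0:ℝ), ENNReal.ofReal
      ((t + t') ^ (-1 - γ) * ((u + t) * (v + t')) * (u + v + (t + t')) ^ (-(M + 1))) =
      ENNReal.ofReal (u * v) * (∫⁻ t in Ioi (0:ℝ), ∫⁻ t' in Ioi (0:ℝ), F 1 1 t t') +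
      ENNReal.ofReal u * (∫⁻ t in Ioi (0:ℝ), ∫⁻ t' in Ioi (0:ℝ), F 1 2 t t') +
      ENNReal.ofReal v * (∫⁻ t in Ioi (0:ℝ), ∫⁻ t' in Ioi (0:ℝ), F 2 1 t t') +
      (∫⁻ t in Ioi (0:ℝ), ∫⁻ t' in Ioi (0:ℝ), F 2 2 t t') := by
    rw [← lintegral_const_mul _ (hFm2 _ _), ← lintegral_const_mul _ (hFm2 _ _),
      ← lintegral_const_mul _ (hFm2 _ _), ← lintegral_add_right _ (by fun_prop),
      ← lintegral_add_right _ (by fun_prop), ← lintegral_add_right _ (by fun_prop)]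
    refine setLIntegral_congr_fun measurableSet_Ioi (fun t ht => ?_)
    rw [← lintegral_const_mul _ (hFm1 _ _ _), ← lintegral_const_mul _ (hFm1 _ _ _),
      ← lintegral_const_mul _ (hFm1 _ _ _), ← lintegral_add_right _ (by fun_prop),
      ← lintegral_add_right _ (by fun_prop), ← lintegral_add_right _ (by fun_prop)]
    refine setLIntegral_congr_fun measurableSet_Ioi (fun t' ht' => ?_)
    have ht : 0 < t := ht
    have ht' : 0 < t' := ht'
    simp only [F]
    rw [← ENNReal.ofReal_mul (by positivity), ← ENNReal.ofReal_mul (by positivity),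
      ← ENNReal.ofReal_mul (by positivity), ← ENNReal.ofReal_add (by positivity) (by positivity),
      ← ENNReal.ofReal_add (by positivity) (by positivity),
      ← ENNReal.ofReal_add (by positivity) (by positivity)]
    congr 1
    norm_num
    ring
  rw [key]
  simp only [F]
  rw [I11, I12, I21, I22, ← ENNReal.ofReal_mul (by positivity), ← ENNReal.ofReal_mul (by positivity),
      ← ENNReal.ofReal_mul (by positivity), ← ENNReal.ofReal_add (by positivity) (by positivity),
      ← ENNReal.ofReal_add (by positivity) (by positivity),
      ← ENNReal.ofReal_add (by positivity) (by positivity)]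
  congr 1
  rw [show 2 - γ - M = 1 + (1 - γ - M) by ring, rpow_add hS, rpow_one]
  ring

open MeasureTheory Real Set in
theorem aux_tR {γ M u v : ℝ} (h0 : 0 < γ) (h1 : γ < 1) (hM : 2 + γ < M) (hu : 0 < u) (hv : 0 < v) :
    ∫⁻ t in Ioi (0:ℝ), ∫⁻ t' in Ioi (0:ℝ), ENNReal.ofReal
      ((t + t') ^ (-2 - γ) * (t * t') * (u + v + (t + t')) ^ (-M)) =
    ENNReal.ofReal (
        Gamma (2 - γ) * Gamma (M - 2 + γ) / Gamma M / 6 * (u + v) ^ (2 - γ - M)) := by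
  have hS : 0 < u + v := by positivity
  have G2 : Gamma 2 = 1 := Gamma_two
  have G3 : Gamma 3 = 2 := by
    rw [show (3:ℝ) = 2 + 1 by norm_num, Gamma_add_one (by norm_num), G2]; norm_num
  have G4 : Gamma 4 = 6 := by
    rw [show (4:ℝ) = 3 + 1 by norm_num, Gamma_add_one (by norm_num), G3]; norm_num
  have I22 := aux_tt (p := 2) (q := 2) (e := -2 - γ) (m := M) (S := u + v)
    (by norm_num) (by norm_num) (by linarith) (by linarith) hS
  rw [show (2:ℝ) + 2 + (-2 - γ) = 2 - γ by ring, show M - (2 - γ) = M - 2 + γ by ring,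
    show (2:ℝ) + 2 = 4 by norm_num, G4, G2] at I22
  refine Eq.trans ?_ (I22.trans ?_)
  · congr 1; ext t; congr 1; ext t'
    norm_num
    congr 1; ring
  · congr 1; ring

open MeasureTheory Real Set in
theorem aux_ss {p e c : ℝ} (hp : 0 < p) (hr : 0 < p + p + e) (hc : 0 ≤ c) :
    ∫⁻ s in Ioi (0:ℝ), ∫⁻ s' in Ioi (0:ℝ), ENNReal.ofReal
      (c * ((s * s') ^ (p - 1) * ((s + s') ^ e * exp (-(s + s'))))) =
    ENNReal.ofReal (c * (Gamma p * Gamma p / Gamma (p + p) * Gamma (p + p + e))) := by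
  have g1 := Gamma_pos_of_pos hp
  have g3 := Gamma_pos_of_pos (add_pos hp hp)
  have h := aux_conv hp hp (g := fun T => ENNReal.ofReal (T ^ e * exp (-T))) (by fun_prop)
  have hg := aux_gamma hr one_pos
  simp only [one_mul, one_rpow, mul_one] at hg
  rw [ENNReal.ofReal_mul hc, ENNReal.ofReal_mul (by positivity), ← hg]
  have h' : ENNReal.ofReal (Gamma p * Gamma p / Gamma (p + p)) *
      ∫⁻ t in Ioi (0:ℝ), ENNReal.ofReal (t ^ (p + p + e - 1) * exp (-t)) =
      ∫⁻ u in Ioi (0:ℝ), ∫⁻ v in Ioi (0:ℝ), ENNReal.ofReal (u ^ (p - 1) * v ^ (p - 1)) *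
        ENNReal.ofReal ((u + v) ^ e * exp (-(u + v))) := by
    rw [h]
    congr 1
    refine setLIntegral_congr_fun measurableSet_Ioi (fun t ht => ?_)
    have ht : 0 < t := ht
    change _ = _ * ENNReal.ofReal _
    rw [← ENNReal.ofReal_mul (by positivity), ← mul_assoc, ← rpow_add ht]
    congr 3; ring
  rw [h', ← lintegral_const_mul' _ _ ENNReal.ofReal_ne_top]
  refine setLIntegral_congr_fun measurableSet_Ioi (fun t ht => ?_)
  change _ = _ * _
  rw [← lintegral_const_mul' _ _ ENNReal.ofReal_ne_top]
  refine setLIntegral_congr_fun measurableSet_Ioi (fun t' ht' => ?_)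
  have ht : 0 < t := ht
  have ht' : 0 < t' := ht'
  rw [← ENNReal.ofReal_mul (by positivity), ← ENNReal.ofReal_mul hc, mul_rpow ht.le ht'.le]

open MeasureTheory Real Set in
theorem aux_4L {γ M : ℝ} (h0 : 0 < γ) (h1 : γ < 1) (hM : 2 + γ < M) :
    ∫⁻ p, ∫⁻ q, ENNReal.ofReal ((p.1 * q.1) ^ (-γ - 1) * exp (-(p.1 + q.1)) *
        ((p.2 + q.2) ^ (-1 - γ) * ((1 / p.1 + p.2) * (1 / q.1 + q.2)) *
        (1 / p.1 + 1 / q.1 + (p.2 + q.2)) ^ (-(M + 1)))) ∂muq ∂muq =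
    ENNReal.ofReal (Gamma (1 - γ) * Gamma (M + γ) / Gamma (M + 1) *
      (Gamma (M - 1) * Gamma (M - 1) / Gamma (2 * M - 2) * Gamma (M - 2 - γ)) +
      (Gamma (2 - γ) * Gamma (M - 1 + γ) / Gamma (M + 1) / 2 +
        Gamma (3 - γ) * Gamma (M - 2 + γ) / Gamma (M + 1) / 6) *
      (Gamma (M - 2) * Gamma (M - 2) / Gamma (2 * M - 4) * Gamma (M - 2 - γ))) := by
  have a1 := Gamma_pos_of_pos (show 0 < 1 - γ by linarith)
  have a2 := Gamma_pos_of_pos (show 0 < 2 - γ by linarith)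
  have a3 := Gamma_pos_of_pos (show 0 < 3 - γ by linarith)
  have b0 := Gamma_pos_of_pos (show 0 < M + γ by linarith)
  have b1 := Gamma_pos_of_pos (show 0 < M - 1 + γ by linarith)
  have b2 := Gamma_pos_of_pos (show 0 < M - 2 + γ by linarith)
  have d1 := Gamma_pos_of_pos (show 0 < M + 1 by linarith)
  have d2 := Gamma_pos_of_pos (show 0 < M - 1 by linarith)
  have d3 := Gamma_pos_of_pos (show 0 < M - 2 by linarith)
  have d4 := Gamma_pos_of_pos (show 0 < 2 * M - 2 by linarith)
  have d5 := Gamma_pos_of_pos (show 0 < 2 * M - 4 by linarith)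
  have d6 := Gamma_pos_of_pos (show 0 < M - 2 - γ by linarith)
  rw [aux_reorder (fun s t s' t' => ENNReal.ofReal ((s * s') ^ (-γ - 1) * exp (-(s + s')) *
        ((t + t') ^ (-1 - γ) * ((1 / s + t) * (1 / s' + t')) *
        (1 / s + 1 / s' + (t + t')) ^ (-(M + 1))))) (by fun_prop)]
  set c1 := Gamma (1 - γ) * Gamma (M + γ) / Gamma (M + 1) with hc1
  set c2 := Gamma (2 - γ) * Gamma (M - 1 + γ) / Gamma (M + 1) / 2 +
        Gamma (3 - γ) * Gamma (M - 2 + γ) / Gamma (M + 1) / 6 with hc2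
  have hc1' : 0 ≤ c1 := by positivity
  have hc2' : 0 ≤ c2 := by positivity
  have J1 := aux_ss (p := M - 1) (e := -γ - M) (c := c1) (by linarith) (by linarith) hc1'
  have J2 := aux_ss (p := M - 2) (e := 2 - γ - M) (c := c2) (by linarith) (by linarith) hc2'
  rw [show M - 1 + (M - 1) + (-γ - M) = M - 2 - γ by ring, show M - 1 + (M - 1) = 2 * M - 2 by ring] at J1
  rw [show M - 2 + (M - 2) + (2 - γ - M) = M - 2 - γ by ring, show M - 2 + (M - 2) = 2 * M - 4 by ring] at J2
  rw [ENNReal.ofReal_add (by positivity) (by positivity), ← J1, ← J2]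
  have hm : ∀ c p e : ℝ, Measurable (Function.uncurry (fun s s' : ℝ => ENNReal.ofReal
      (c * ((s * s') ^ (p - 1) * ((s + s') ^ e * exp (-(s + s'))))))) := by
    intro c p e; simp only [Function.uncurry_def]; fun_prop
  rw [← lintegral_add_right _ (hm _ _ _).lintegral_prod_right]
  refine setLIntegral_congr_fun measurableSet_Ioi (fun s hs => ?_)
  change _ = _ + _
  rw [← lintegral_add_right _ (hm _ _ _).of_uncurry_left]
  refine setLIntegral_congr_fun measurableSet_Ioi (fun s' hs' => ?_)
  have hs : 0 < s := hs
  have hs' : 0 < s' := hs'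
  change _ = _ + _
  rw [← ENNReal.ofReal_add (by positivity) (by positivity)]
  simp_rw [ENNReal.ofReal_mul (p := (s * s') ^ (-γ - 1) * exp (-(s + s'))) (by positivity)]
  have hI := aux_tL (u := 1 / s) (v := 1 / s') h0 h1 hM (by positivity) (by positivity)
  calc _ = ENNReal.ofReal ((s * s') ^ (-γ - 1) * exp (-(s + s'))) *
        ∫⁻ t in Ioi (0:ℝ), ∫⁻ t' in Ioi (0:ℝ), ENNReal.ofReal ((t + t') ^ (-1 - γ) * ((1 / s + t) * (1 / s' + t')) * (1 / s + 1 / s' + (t + t')) ^ (-(M + 1))) := by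
        rw [← lintegral_const_mul' _ _ ENNReal.ofReal_ne_top]
        congr 1; ext t
        rw [← lintegral_const_mul' _ _ ENNReal.ofReal_ne_top]
    _ = _ := by
        rw [hI, ← ENNReal.ofReal_mul (by positivity), ← hc1, ← hc2]
        congr 1
        have hss : 0 < s * s' := by positivity
        have eS : 1 / s + 1 / s' = (s + s') * (s * s')⁻¹ := by field_simp; ring
        have e0 : ∀ z : ℝ, (1 / s + 1 / s') ^ z = (s + s') ^ z * (s * s') ^ (-z) := fun z => by
          rw [eS, mul_rpow (by positivity) (by positivity), inv_rpow hss.le, rpow_neg hss.le]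
        have e1 : (s * s') ^ (-γ - 1) * (1 / s * (1 / s')) * (s * s') ^ (-(-γ - M)) = (s * s') ^ (M - 1 - 1) := by
          rw [show 1 / s * (1 / s') = (s * s') ^ (-1 : ℝ) by rw [rpow_neg_one]; field_simp,
            ← rpow_add hss, ← rpow_add hss]
          congr 1; ring
        have e2 : (s * s') ^ (-γ - 1) * (s * s') ^ (-(2 - γ - M)) = (s * s') ^ (M - 2 - 1) := by
          rw [← rpow_add hss]
          congr 1; ring
        rw [e0, e0, ← e1, ← e2]
        ring

open MeasureTheory Real Set in
theorem aux_4R {γ M : ℝ} (h0 : 0 < γ) (h1 : γ < 1) (hM : 2 + γ < M) :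
    ∫⁻ p, ∫⁻ q, ENNReal.ofReal ((p.1 * q.1) ^ (-γ - 1) * exp (-(p.1 + q.1)) *
        ((p.2 + q.2) ^ (-2 - γ) * (p.2 * q.2) *
        (1 / p.1 + 1 / q.1 + (p.2 + q.2)) ^ (-M))) ∂muq ∂muq =
    ENNReal.ofReal (Gamma (2 - γ) * Gamma (M - 2 + γ) / Gamma M / 6 *
      (Gamma (M - 2) * Gamma (M - 2) / Gamma (2 * M - 4) * Gamma (M - 2 - γ))) := by
  have a2 := Gamma_pos_of_pos (show 0 < 2 - γ by linarith)
  have b2 := Gamma_pos_of_pos (show 0 < M - 2 + γ by linarith)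
  have d1 := Gamma_pos_of_pos (show 0 < M by linarith)
  rw [aux_reorder (fun s t s' t' => ENNReal.ofReal ((s * s') ^ (-γ - 1) * exp (-(s + s')) *
        ((t + t') ^ (-2 - γ) * (t * t') *
        (1 / s + 1 / s' + (t + t')) ^ (-M)))) (by fun_prop)]
  set c2 := Gamma (2 - γ) * Gamma (M - 2 + γ) / Gamma M / 6 with hc2
  have hc2' : 0 ≤ c2 := by positivity
  have J2 := aux_ss (p := M - 2) (e := 2 - γ - M) (c := c2) (by linarith) (by linarith) hc2'
  rw [show M - 2 + (M - 2) + (2 - γ - M) = M - 2 - γ by ring, show M - 2 + (M - 2) = 2 * M - 4 by ring] at J2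
  rw [← J2]
  refine setLIntegral_congr_fun measurableSet_Ioi (fun s hs => ?_)
  refine setLIntegral_congr_fun measurableSet_Ioi (fun s' hs' => ?_)
  have hs : 0 < s := hs
  have hs' : 0 < s' := hs'
  simp_rw [ENNReal.ofReal_mul (p := (s * s') ^ (-γ - 1) * exp (-(s + s'))) (by positivity)]
  have hI := aux_tR (u := 1 / s) (v := 1 / s') h0 h1 hM (by positivity) (by positivity)
  calc _ = ENNReal.ofReal ((s * s') ^ (-γ - 1) * exp (-(s + s'))) *
        ∫⁻ t in Ioi (0:ℝ), ∫⁻ t' in Ioi (0:ℝ), ENNReal.ofReal ((t + t') ^ (-2 - γ) * (t * t') * (1 / s + 1 / s' + (t + t')) ^ (-M)) := by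
        rw [← lintegral_const_mul' _ _ ENNReal.ofReal_ne_top]
        congr 1; ext t
        rw [← lintegral_const_mul' _ _ ENNReal.ofReal_ne_top]
    _ = _ := by
        rw [hI, ← ENNReal.ofReal_mul (by positivity), ← hc2]
        congr 1
        have hss : 0 < s * s' := by positivity
        have eS : 1 / s + 1 / s' = (s + s') * (s * s')⁻¹ := by field_simp; ring
        have e0 : ∀ z : ℝ, (1 / s + 1 / s') ^ z = (s + s') ^ z * (s * s') ^ (-z) := fun z => by
          rw [eS, mul_rpow (by positivity) (by positivity), inv_rpow hss.le, rpow_neg hss.le]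
        have e2 : (s * s') ^ (-γ - 1) * (s * s') ^ (-(2 - γ - M)) = (s * s') ^ (M - 2 - 1) := by
          rw [← rpow_add hss]
          congr 1; ring
        rw [e0, ← e2]
        ring

open MeasureTheory Real Set in
theorem aux_sq {Z : Type*} [MeasurableSpace Z] (ρ : Measure Z) [SFinite ρ] (W : Z → ENNReal)
    (k : ℝ × ℝ → Z → ENNReal) (hW : Measurable W) (hk : Measurable (Function.uncurry k)) (c : ENNReal) :
    ∫⁻ z, W z * (c * ∫⁻ p, k p z ∂muq) ^ 2 ∂ρ =
      c ^ 2 * ∫⁻ p, ∫⁻ q, ∫⁻ z, W z * (k p z * k q z) ∂ρ ∂muq ∂muq := by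
  have hkz : ∀ z, Measurable (fun p => k p z) := fun z => hk.of_uncurry_right
  have h1 : ∀ z, W z * (c * ∫⁻ p, k p z ∂muq) ^ 2 =
      c ^ 2 * ∫⁻ r, W z * (k r.1 z * k r.2 z) ∂(muq.prod muq) := by
    intro z
    have hmz : Measurable (fun r : (ℝ × ℝ) × (ℝ × ℝ) => k r.1 z * k r.2 z) :=
      ((hkz z).comp measurable_fst).mul ((hkz z).comp measurable_snd)
    rw [lintegral_const_mul _ hmz,
      lintegral_prod_mul (hkz z).aemeasurable (hkz z).aemeasurable]
    ring
  have hm : Measurable (fun w : Z × ((ℝ × ℝ) × (ℝ × ℝ)) => W w.1 * (k w.2.1 w.1 * k w.2.2 w.1)) := by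
    refine (hW.comp measurable_fst).mul (Measurable.mul ?_ ?_)
    · exact hk.comp (f := fun w : Z × ((ℝ × ℝ) × (ℝ × ℝ)) => (w.2.1, w.1)) (by fun_prop)
    · exact hk.comp (f := fun w : Z × ((ℝ × ℝ) × (ℝ × ℝ)) => (w.2.2, w.1)) (by fun_prop)
  simp_rw [h1]
  rw [lintegral_const_mul _ (Measurable.lintegral_prod_right' hm)]
  congr 1
  rw [lintegral_lintegral_swap hm.aemeasurable, lintegral_prod]
  exact (Measurable.lintegral_prod_left' hm).aemeasurable

open MeasureTheory Real Set in
theorem aux_bochner {n : ℕ} (F : ℝ → EuclideanSpace ℝ (Fin n) → ℝ) (v : ℝ) (hv : 0 ≤ v)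
    (hF0 : ∀ y, 0 < y → ∀ x, 0 ≤ F y x) (hFm : Measurable (Function.uncurry F))
    (h : ∫⁻ z, ENNReal.ofReal (F z.1 z.2) ∂(((volume : Measure ℝ).restrict (Ioi 0)).prod volume) =
      ENNReal.ofReal v) :
    ∫ y in Ioi (0:ℝ), ∫ x, F y x = v := by
  have hpos : ∀ᵐ z ∂(((volume : Measure ℝ).restrict (Ioi 0)).prod
      (volume : Measure (EuclideanSpace ℝ (Fin n)))), 0 < z.1 :=
    Measure.quasiMeasurePreserving_fst.ae (ae_restrict_mem measurableSet_Ioi)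
  have h0 : 0 ≤ᵐ[((volume : Measure ℝ).restrict (Ioi 0)).prod
      (volume : Measure (EuclideanSpace ℝ (Fin n)))] Function.uncurry F := by
    filter_upwards [hpos] with z hz
    exact hF0 _ hz _
  have hi : Integrable (Function.uncurry F) (((volume : Measure ℝ).restrict (Ioi 0)).prod
      (volume : Measure (EuclideanSpace ℝ (Fin n)))) := by
    rw [← lintegral_ofReal_ne_top_iff_integrable hFm.aestronglyMeasurable h0]
    exact h ▸ ENNReal.ofReal_ne_top
  have := integral_prod _ hi
  simp only [Function.uncurry_apply_pair] at this
  rw [← this, integral_eq_lintegral_of_nonneg_ae h0 hFm.aestronglyMeasurable]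
  exact (congrArg ENNReal.toReal h).trans (ENNReal.toReal_ofReal hv)

open MeasureTheory Real Set in
theorem aux_Uint {n : ℕ} {γ : ℝ} (hγ : 0 < γ) (hn : 4 + 2 * γ < (n:ℝ))
    (x : EuclideanSpace ℝ (Fin n)) {y : ℝ} (hy : 0 < y) :
    Integrable (fun ξ : EuclideanSpace ℝ (Fin n) =>
      (y ^ (2*γ) * (‖x - ξ‖^2 + y^2) ^ (-(((n:ℝ) + 2*γ)/2)) *
        (1 + ‖ξ‖^2) ^ (-(((n:ℝ) - 2*γ)/2)))) := by
  have h1 := integrable_rpow_neg_one_add_norm_sq (E := EuclideanSpace ℝ (Fin n)) (μ := volume)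
    (r := (n:ℝ) + 2 * γ) (by simp; linarith)
  have h2 := (h1.comp_sub_left x).const_mul (y ^ (2 * γ) * (min 1 (y ^ 2)) ^ (-(((n:ℝ) + 2*γ)/2)))
  refine h2.mono' (by fun_prop) (Filter.Eventually.of_forall fun ξ => ?_)
  have hm : 0 < min 1 (y ^ 2) := by positivity
  rw [norm_of_nonneg (by positivity)]
  have e1 : (1 + ‖ξ‖^2) ^ (-(((n:ℝ) - 2*γ)/2)) ≤ 1 :=
    rpow_le_one_of_one_le_of_nonpos (by nlinarith [sq_nonneg ‖ξ‖]) (by linarith)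
  have e2 : (‖x - ξ‖^2 + y^2) ^ (-(((n:ℝ) + 2*γ)/2)) ≤
      (min 1 (y ^ 2)) ^ (-(((n:ℝ) + 2*γ)/2)) * (1 + ‖x - ξ‖ ^ 2) ^ (-((n:ℝ) + 2*γ)/2) := by
    rw [neg_div, ← mul_rpow hm.le (by positivity)]
    refine rpow_le_rpow_of_nonpos (by positivity) ?_ (by linarith)
    nlinarith [min_le_left 1 (y ^ 2), min_le_right 1 (y ^ 2), sq_nonneg ‖x - ξ‖]
  calc _ ≤ y ^ (2*γ) * (‖x - ξ‖^2 + y^2) ^ (-(((n:ℝ) + 2*γ)/2)) * 1 := by gcongr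
    _ ≤ _ := by
      rw [mul_one, mul_assoc]
      gcongr

open MeasureTheory Real Set in
theorem aux_alg {γ M : ℝ} (h0 : 0 < γ) (h1 : γ < 1) (hM : 2 + γ < M) (K : ℝ) :
    K * (Gamma (1 + γ) / 4) * (Gamma (1 - γ) * Gamma (M + γ) / Gamma (M + 1) *
      (Gamma (M - 1) * Gamma (M - 1) / Gamma (2 * M - 2) * Gamma (M - 2 - γ)) +
      (Gamma (2 - γ) * Gamma (M - 1 + γ) / Gamma (M + 1) / 2 +
        Gamma (3 - γ) * Gamma (M - 2 + γ) / Gamma (M + 1) / 6) *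
      (Gamma (M - 2) * Gamma (M - 2) / Gamma (2 * M - 4) * Gamma (M - 2 - γ))) =
    (3 * M ^ 2 - 9 * M + 7 - γ ^ 2) / (2 * (2 * M - 3) * (1 - γ) * (1 + γ)) *
    (K * (Gamma (2 + γ) / 2) * (Gamma (2 - γ) * Gamma (M - 2 + γ) / Gamma M / 6 *
      (Gamma (M - 2) * Gamma (M - 2) / Gamma (2 * M - 4) * Gamma (M - 2 - γ)))) := by
  have r1 : Gamma (2 + γ) = (1 + γ) * Gamma (1 + γ) := by
    rw [← Gamma_add_one (by linarith)]; congr 1; ring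
  have r2 : Gamma (2 - γ) = (1 - γ) * Gamma (1 - γ) := by
    rw [← Gamma_add_one (by linarith)]; congr 1; ring
  have r3 : Gamma (3 - γ) = (2 - γ) * Gamma (2 - γ) := by
    rw [← Gamma_add_one (by linarith)]; congr 1; ring
  have r4 : Gamma (M - 1 + γ) = (M - 2 + γ) * Gamma (M - 2 + γ) := by
    rw [← Gamma_add_one (by linarith)]; congr 1; ring
  have r5 : Gamma (M + γ) = (M - 1 + γ) * Gamma (M - 1 + γ) := by
    rw [← Gamma_add_one (by linarith)]; congr 1; ring
  have r6 : Gamma (M + 1) = M * Gamma M := Gamma_add_one (by linarith)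
  have r7 : Gamma (M - 1) = (M - 2) * Gamma (M - 2) := by
    rw [← Gamma_add_one (by linarith)]; congr 1; ring
  have r8 : Gamma (2 * M - 2) = (2 * M - 3) * Gamma (2 * M - 3) := by
    rw [← Gamma_add_one (by linarith)]; congr 1; ring
  have r9 : Gamma (2 * M - 3) = (2 * M - 4) * Gamma (2 * M - 4) := by
    rw [← Gamma_add_one (by linarith)]; congr 1; ring
  rw [r5, r4, r3, r2, r1, r6, r7, r8, r9]
  clear r1 r2 r3 r4 r5 r6 r7 r8 r9
  have p1 := Gamma_pos_of_pos (show 0 < M by linarith)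
  have p2 := Gamma_pos_of_pos (show 0 < 2 * M - 4 by linarith)
  have q1 : M ≠ 0 := by linarith
  have q2 : 2 * M - 3 ≠ 0 := by linarith
  have q3 : M - 2 ≠ 0 := by linarith
  have q4 : 1 - γ ≠ 0 := by linarith
  have q5 : 1 + γ ≠ 0 := by linarith
  rw [show 2 * M - 4 = 2 * (M - 2) by ring] at *
  generalize Gamma (2 * (M - 2)) = g1 at *
  generalize Gamma (M - 2) = g2 at *
  generalize Gamma (M - 2 + γ) = g3 at *
  generalize Gamma (M - 2 - γ) = g4 at *
  generalize Gamma (1 - γ) = g5 at *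
  generalize Gamma (1 + γ) = g6 at *
  generalize Gamma M = g7 at *
  obtain ⟨d, hd⟩ : ∃ d, d = 2 * M - 3 := ⟨_, rfl⟩
  rw [← hd] at q2 ⊢
  field_simp
  rw [hd]
  ring

open MeasureTheory Real in
theorem stmt_15 (γ : ℝ) (hγ : γ ∈ Set.Ioo (0:ℝ) 1) (a : ℝ) (ha : a = 1 - 2*γ)
    (n : ℕ) (hn : 4 + 2*γ < (n:ℝ))
    (w : EuclideanSpace ℝ (Fin n) → ℝ)
    (hw : ∀ x : EuclideanSpace ℝ (Fin n), w x = (1 + ‖x‖^2) ^ (-(((n:ℝ) - 2*γ)/2)))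
    (U : EuclideanSpace ℝ (Fin n) → ℝ → ℝ)
    (hU : ∀ x : EuclideanSpace ℝ (Fin n), ∀ y : ℝ,
      U x y = ∫ ξ : EuclideanSpace ℝ (Fin n),
        y ^ (2*γ) * (‖x - ξ‖^2 + y^2) ^ (-(((n:ℝ) + 2*γ)/2)) * w ξ) :
    ∫ y in Set.Ioi (0:ℝ), ∫ x : EuclideanSpace ℝ (Fin n),
      y ^ a * (x ⟨0, by exact_mod_cast show (0:ℝ) < (n:ℝ) by linarith [hγ.1]⟩)^2 * (U x y)^2 =
    ((3*(n:ℝ)^2 - 18*(n:ℝ) - (a^2 - 2*a - 27)) / (2*((n:ℝ)-3)*(3-a)*(a+1))) *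
      ∫ y in Set.Ioi (0:ℝ), ∫ x : EuclideanSpace ℝ (Fin n), y ^ (a+2) * (U x y)^2 := by
  obtain ⟨h0, h1⟩ := hγ
  have hM : 2 + γ < (n:ℝ) / 2 := by linarith
  generalize hi : (⟨0, _⟩ : Fin n) = i
  simp_rw [hw] at hU
  have hUm : Measurable (fun z : ℝ × EuclideanSpace ℝ (Fin n) => U z.2 z.1) := by
    simp_rw [hU]
    refine StronglyMeasurable.measurable (StronglyMeasurable.integral_prod_right' (f := fun w :
      (ℝ × EuclideanSpace ℝ (Fin n)) × EuclideanSpace ℝ (Fin n) => w.1.1 ^ (2*γ) *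
        (‖w.1.2 - w.2‖^2 + w.1.1^2) ^ (-(((n:ℝ) + 2*γ)/2)) * (1 + ‖w.2‖^2) ^ (-(((n:ℝ) - 2*γ)/2))) ?_)
    exact Measurable.stronglyMeasurable (by fun_prop)
  have gP := Gamma_pos_of_pos (show 0 < ((n:ℝ) - 2*γ)/2 by linarith)
  have gQ := Gamma_pos_of_pos (show 0 < ((n:ℝ) + 2*γ)/2 by linarith)
  obtain ⟨C, hC⟩ : ∃ C, C = π ^ ((n:ℝ) / 2) / (Gamma (((n:ℝ) - 2*γ)/2) * Gamma (((n:ℝ) + 2*γ)/2)) :=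
    ⟨_, rfl⟩
  have hC0 : 0 ≤ C := by rw [hC]; positivity
  have hU0 : ∀ x y, 0 < y → 0 ≤ U x y := by
    intro x y hy
    rw [hU]
    exact integral_nonneg (fun ξ => by positivity)
  have hUr : ∀ x y, 0 < y → ENNReal.ofReal (U x y) =
      ENNReal.ofReal C * ∫⁻ p, ENNReal.ofReal (kker n γ p x y) ∂muq := by
    intro x y hy
    rw [hC, ← aux_Urep h0 hn x hy, hU, ofReal_integral_eq_lintegral_ofReal (aux_Uint h0 hn x hy)]
    exact Filter.Eventually.of_forall (fun ξ => by positivity)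
  have hkm : Measurable (Function.uncurry (fun (p : ℝ × ℝ) (z : ℝ × EuclideanSpace ℝ (Fin n)) =>
      ENNReal.ofReal (kker n γ p z.2 z.1))) := by
    simp only [kker, Function.uncurry_def]; fun_prop
  have hpos : ∀ᵐ z ∂(((volume : Measure ℝ).restrict (Set.Ioi 0)).prod
      (volume : Measure (EuclideanSpace ℝ (Fin n)))), 0 < z.1 :=
    Measure.quasiMeasurePreserving_fst.ae (ae_restrict_mem measurableSet_Ioi)
  have a1 := Gamma_pos_of_pos (show 0 < 1 + γ by linarith)
  have a2 := Gamma_pos_of_pos (show 0 < 2 + γ by linarith)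
  have b1 := Gamma_pos_of_pos (show 0 < 1 - γ by linarith)
  have b2 := Gamma_pos_of_pos (show 0 < 2 - γ by linarith)
  have b3 := Gamma_pos_of_pos (show 0 < 3 - γ by linarith)
  have c0 := Gamma_pos_of_pos (show 0 < (n:ℝ) / 2 + γ by linarith)
  have c1 := Gamma_pos_of_pos (show 0 < (n:ℝ) / 2 - 1 + γ by linarith)
  have c2 := Gamma_pos_of_pos (show 0 < (n:ℝ) / 2 - 2 + γ by linarith)
  have c3 := Gamma_pos_of_pos (show 0 < (n:ℝ) / 2 - 2 - γ by linarith)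
  have d0 := Gamma_pos_of_pos (show 0 < (n:ℝ) / 2 + 1 by linarith)
  have d1 := Gamma_pos_of_pos (show 0 < (n:ℝ) / 2 by linarith)
  have d2 := Gamma_pos_of_pos (show 0 < (n:ℝ) / 2 - 1 by linarith)
  have d3 := Gamma_pos_of_pos (show 0 < (n:ℝ) / 2 - 2 by linarith)
  have d4 := Gamma_pos_of_pos (show 0 < 2 * ((n:ℝ) / 2) - 2 by linarith)
  have d5 := Gamma_pos_of_pos (show 0 < 2 * ((n:ℝ) / 2) - 4 by linarith)
  have L4 := aux_4L h0 h1 hM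
  have R4 := aux_4R h0 h1 hM
  have AL := aux_alg h0 h1 hM (C ^ 2 * π ^ ((n:ℝ) / 2))
  obtain ⟨VL, hVL⟩ : ∃ VL, VL = Gamma (1 - γ) * Gamma ((n:ℝ) / 2 + γ) / Gamma ((n:ℝ) / 2 + 1) *
      (Gamma ((n:ℝ) / 2 - 1) * Gamma ((n:ℝ) / 2 - 1) / Gamma (2 * ((n:ℝ) / 2) - 2) * Gamma ((n:ℝ) / 2 - 2 - γ)) +
      (Gamma (2 - γ) * Gamma ((n:ℝ) / 2 - 1 + γ) / Gamma ((n:ℝ) / 2 + 1) / 2 +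
        Gamma (3 - γ) * Gamma ((n:ℝ) / 2 - 2 + γ) / Gamma ((n:ℝ) / 2 + 1) / 6) *
      (Gamma ((n:ℝ) / 2 - 2) * Gamma ((n:ℝ) / 2 - 2) / Gamma (2 * ((n:ℝ) / 2) - 4) * Gamma ((n:ℝ) / 2 - 2 - γ)) :=
    ⟨_, rfl⟩
  obtain ⟨VR, hVR⟩ : ∃ VR, VR = Gamma (2 - γ) * Gamma ((n:ℝ) / 2 - 2 + γ) / Gamma ((n:ℝ) / 2) / 6 *
      (Gamma ((n:ℝ) / 2 - 2) * Gamma ((n:ℝ) / 2 - 2) / Gamma (2 * ((n:ℝ) / 2) - 4) * Gamma ((n:ℝ) / 2 - 2 - γ)) :=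
    ⟨_, rfl⟩
  have hVL0 : 0 ≤ VL := by rw [hVL]; positivity
  have hVR0 : 0 ≤ VR := by rw [hVR]; positivity
  rw [← hVL] at L4
  rw [← hVR] at R4
  rw [← hVL, ← hVR] at AL
  have EL : ∫ y in Set.Ioi (0:ℝ), ∫ x : EuclideanSpace ℝ (Fin n), y ^ a * (x i)^2 * (U x y)^2 =
      C ^ 2 * π ^ ((n:ℝ) / 2) * (Gamma (1 + γ) / 4) * VL := by
    refine aux_bochner (fun y x => y ^ a * (x i)^2 * (U x y)^2) _ (by positivity)
      (fun y hy x => by positivity) ?_ ?_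
    · simp only [Function.uncurry_def]
      exact Measurable.mul (by fun_prop) (hUm.pow_const 2)
    · calc _ = ∫⁻ z : ℝ × EuclideanSpace ℝ (Fin n), ENNReal.ofReal (z.1 ^ a * (z.2 i) ^ 2) *
            (ENNReal.ofReal C * ∫⁻ p, ENNReal.ofReal (kker n γ p z.2 z.1) ∂muq) ^ 2
            ∂(((volume : Measure ℝ).restrict (Set.Ioi 0)).prod volume) := by
            refine lintegral_congr_ae ?_
            filter_upwards [hpos] with z hz
            rw [← hUr _ _ hz, ← ENNReal.ofReal_pow (hU0 _ _ hz), ← ENNReal.ofReal_mul (by positivity)]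
        _ = _ := by
            rw [aux_sq _ (fun z : ℝ × EuclideanSpace ℝ (Fin n) => ENNReal.ofReal (z.1 ^ a * (z.2 i) ^ 2))
              (fun p z => ENNReal.ofReal (kker n γ p z.2 z.1)) (by fun_prop) hkm]
            have : ∫⁻ p, ∫⁻ q, ∫⁻ z : ℝ × EuclideanSpace ℝ (Fin n), ENNReal.ofReal (z.1 ^ a * (z.2 i) ^ 2) *
                (ENNReal.ofReal (kker n γ p z.2 z.1) * ENNReal.ofReal (kker n γ q z.2 z.1))
                ∂(((volume : Measure ℝ).restrict (Set.Ioi 0)).prod volume) ∂muq ∂muq =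
                ENNReal.ofReal (π ^ ((n:ℝ) / 2) * Gamma (1 + γ) / 4) * ENNReal.ofReal VL := by
              rw [← L4, ← lintegral_const_mul' _ _ ENNReal.ofReal_ne_top]
              refine lintegral_congr_ae ?_
              filter_upwards [aux_ae_quad] with p hp
              rw [← lintegral_const_mul' _ _ ENNReal.ofReal_ne_top]
              refine lintegral_congr_ae ?_
              filter_upwards [aux_ae_quad] with q hq
              exact aux_xyL i h0 ha hp.1 hp.2 hq.1 hq.2
            rw [this, ← ENNReal.ofReal_pow hC0, ← ENNReal.ofReal_mul (by positivity),
              ← ENNReal.ofReal_mul (by positivity)]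
            congr 1; ring
  have ER : ∫ y in Set.Ioi (0:ℝ), ∫ x : EuclideanSpace ℝ (Fin n), y ^ (a + 2) * (U x y)^2 =
      C ^ 2 * π ^ ((n:ℝ) / 2) * (Gamma (2 + γ) / 2) * VR := by
    refine aux_bochner (fun y x => y ^ (a + 2) * (U x y)^2) _ (by positivity)
      (fun y hy x => by positivity) ?_ ?_
    · simp only [Function.uncurry_def]
      exact Measurable.mul (by fun_prop) (hUm.pow_const 2)
    · calc _ = ∫⁻ z : ℝ × EuclideanSpace ℝ (Fin n), ENNReal.ofReal (z.1 ^ (a + 2)) *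
            (ENNReal.ofReal C * ∫⁻ p, ENNReal.ofReal (kker n γ p z.2 z.1) ∂muq) ^ 2
            ∂(((volume : Measure ℝ).restrict (Set.Ioi 0)).prod volume) := by
            refine lintegral_congr_ae ?_
            filter_upwards [hpos] with z hz
            rw [← hUr _ _ hz, ← ENNReal.ofReal_pow (hU0 _ _ hz), ← ENNReal.ofReal_mul (by positivity)]
        _ = _ := by
            rw [aux_sq _ (fun z : ℝ × EuclideanSpace ℝ (Fin n) => ENNReal.ofReal (z.1 ^ (a + 2)))
              (fun p z => ENNReal.ofReal (kker n γ p z.2 z.1)) (by fun_prop) hkm]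
            have : ∫⁻ p, ∫⁻ q, ∫⁻ z : ℝ × EuclideanSpace ℝ (Fin n), ENNReal.ofReal (z.1 ^ (a + 2)) *
                (ENNReal.ofReal (kker n γ p z.2 z.1) * ENNReal.ofReal (kker n γ q z.2 z.1))
                ∂(((volume : Measure ℝ).restrict (Set.Ioi 0)).prod volume) ∂muq ∂muq =
                ENNReal.ofReal (π ^ ((n:ℝ) / 2) * Gamma (2 + γ) / 2) * ENNReal.ofReal VR := by
              rw [← R4, ← lintegral_const_mul' _ _ ENNReal.ofReal_ne_top]
              refine lintegral_congr_ae ?_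
              filter_upwards [aux_ae_quad] with p hp
              rw [← lintegral_const_mul' _ _ ENNReal.ofReal_ne_top]
              refine lintegral_congr_ae ?_
              filter_upwards [aux_ae_quad] with q hq
              exact aux_xyR h0 ha hp.1 hp.2 hq.1 hq.2
            rw [this, ← ENNReal.ofReal_pow hC0, ← ENNReal.ofReal_mul (by positivity),
              ← ENNReal.ofReal_mul (by positivity)]
            congr 1; ring
  rw [EL, ER, AL]
  congr 1
  have q2 : (n:ℝ) - 3 ≠ 0 := by linarith
  have q4 : 1 - γ ≠ 0 := by linarith
  have q5 : 1 + γ ≠ 0 := by linarith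
  rw [ha, show 2 * ((n:ℝ) / 2) - 3 = (n:ℝ) - 3 by ring, show 3 - (1 - 2 * γ) = 2 * (1 + γ) by ring,
    show 1 - 2 * γ + 1 = 2 * (1 - γ) by ring]
  field_simp
  ring
end
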